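/- arXiv:2302.08608 — 10 statements merged into one kernel-verified Lean document; each statement's English description precedes it below -/
import Mathlib

section
/- For every integer k ≥ 1, N'_k = gcd(p_k, p_{k−1} + 1). -/
/-!
By Cayley–Hamilton, `A ^ 2 = (tr A) • A - (det A) • 1`, so every positive power of `A` is a
combination `A ^ k = p k • A - (det A * p (k - 1)) • 1`, where `p` is the recurrence sequence.
Hence `A ^ k - 1 = x • A - y • 1` with `x = p k` and `y = det A * p (k - 1) + 1`. A common divisor
of the entries of this matrix divides `x` times each of `b`, `c` and `a - d`; when these three
generate the unit ideal it divides `x`, and then also `y`. So the moduli `N` with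
`A ^ k ≡ 1 (mod N)` are exactly the divisors of `gcd x y`.
-/

section Powers

variable {R S : Type*} [CommRing R] [Ring S] [Algebra R S]

theorem pow_succ_eq_of_sq_eq {P Q : R} {x : S} (hx : x ^ 2 = P • x - Q • 1) {p : ℕ → R}
    (hp0 : p 0 = 0) (hp1 : p 1 = 1) (hrec : ∀ t, p (t + 2) = P * p (t + 1) - Q * p t) (k : ℕ) :
    x ^ (k + 1) = p (k + 1) • x - (Q * p k) • 1 := by
  induction k with
  | zero => simp [hp0, hp1]
  | succ k ih =>
    calc x ^ (k + 2) = p (k + 1) • x ^ 2 - (Q * p k) • x := by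
          rw [pow_succ, ih, sub_mul, smul_mul_assoc, smul_mul_assoc, one_mul, sq]
      _ = p (k + 2) • x - (Q * p (k + 1)) • 1 := by
          rw [hx, hrec]
          module

theorem matrix_fin_two_sq_eq (A : Matrix (Fin 2) (Fin 2) R) :
    A ^ 2 = A.trace • A - A.det • 1 := by
  nontriviality R
  have hCH := A.aeval_self_charpoly
  simp only [Matrix.charpoly_fin_two, map_add, map_sub, map_mul, map_pow, Polynomial.aeval_X,
    Polynomial.aeval_C, Algebra.algebraMap_eq_smul_one, smul_mul_assoc, one_mul] at hCH
  rw [← sub_eq_zero, ← hCH]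
  abel

end Powers

section Divisibility

variable {R : Type*} [CommRing R]

theorem span_triple_eq_top_of_isCoprime {x y : R} (h : IsCoprime x y) (z : R) :
    Ideal.span {x, y, z} = ⊤ := by
  have hpair : (1 : R) ∈ Ideal.span {x, y} := Ideal.mem_span_pair.2 h
  exact (Ideal.eq_top_iff_one _).2 (Ideal.span_mono (by grind) hpair)

theorem dvd_of_forall_dvd_mul_of_span_eq_top {s : Set R} (hs : Ideal.span s = ⊤) {r x : R}
    (h : ∀ a ∈ s, r ∣ x * a) : r ∣ x := by
  have hle : Ideal.span s ≤ Submodule.comap (LinearMap.mulLeft R x) (Ideal.span {r}) :=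
    Ideal.span_le.2 fun a ha => Ideal.mem_span_singleton.2 (h a ha)
  have hone : (1 : R) ∈ Ideal.span s := hs ▸ Submodule.mem_top
  simpa [Ideal.mem_span_singleton] using hle hone

theorem forall_dvd_smul_sub_smul_one_iff {A : Matrix (Fin 2) (Fin 2) R}
    (hA : Ideal.span {A 0 1, A 1 0, A 0 0 - A 1 1} = ⊤) {r x y : R} :
    (∀ i j, r ∣ (x • A - y • 1) i j) ↔ r ∣ x ∧ r ∣ y := by
  constructor
  · intro h
    have h00 : r ∣ x * A 0 0 - y := by simpa using h 0 0
    have h01 : r ∣ x * A 0 1 := by simpa using h 0 1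
    have h10 : r ∣ x * A 1 0 := by simpa using h 1 0
    have h11 : r ∣ x * A 1 1 - y := by simpa using h 1 1
    have hdiag : r ∣ x * (A 0 0 - A 1 1) := by
      simpa only [mul_sub, sub_sub_sub_cancel_right] using dvd_sub h00 h11
    have hx : r ∣ x := dvd_of_forall_dvd_mul_of_span_eq_top hA (by simp [h01, h10, hdiag])
    exact ⟨hx, (dvd_sub_right (hx.mul_right _)).1 h00⟩
  · rintro ⟨hx, hy⟩ i j
    exact dvd_sub (hx.mul_right _) (hy.mul_right _)

end Divisibility

theorem eq_of_isGreatest_pos_dvd {m n : ℕ} (hn : IsGreatest {d | 0 < d ∧ d ∣ m} n) : n = m := by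
  obtain ⟨⟨-, hdvd⟩, hmax⟩ := hn
  have hm : 0 < m := by
    by_contra! hm
    have : n + 1 ≤ n := hmax ⟨n.succ_pos, by simp [Nat.le_zero.1 hm]⟩
    omega
  exact (Nat.le_of_dvd hm hdvd).antisymm (hmax ⟨hm, dvd_rfl⟩)

theorem stmt3_general (A : Matrix (Fin 2) (Fin 2) ℤ)
    (hA : Ideal.span {A 0 1, A 1 0, A 0 0 - A 1 1} = ⊤) (p : ℕ → ℤ) (hp0 : p 0 = 0)
    (hp1 : p 1 = 1) (hrec : ∀ t, p (t + 2) = A.trace * p (t + 1) - A.det * p t) (k N : ℕ)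
    (hN : IsGreatest {N : ℕ | 0 < N ∧ ∀ i j, (N : ℤ) ∣ (A ^ (k + 1) - 1) i j} N) :
    N = Int.gcd (p (k + 1)) (A.det * p k + 1) := by
  have hpow : A ^ (k + 1) - 1 = p (k + 1) • A - (A.det * p k + 1) • 1 := by
    rw [pow_succ_eq_of_sq_eq (matrix_fin_two_sq_eq A) hp0 hp1 hrec, add_smul, one_smul, sub_sub]
  simp only [hpow, forall_dvd_smul_sub_smul_one_iff hA, ← Int.dvd_gcd_iff] at hN
  exact eq_of_isGreatest_pos_dvd hN

/-- With `A = !![a, b; c, d]` of determinant 1, trace `a + d > 2`,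
`gcd(b, c) = 1`, `p` the recurrence sequence, and `N' k` the largest positive integer `N`
such that `A^k ≡ I (mod N)` entrywise, we have `N' k = gcd(p k, p (k-1) + 1)` for `k ≥ 1`. -/
theorem stmt3 (a b c d : ℤ) (hdet : a * d - b * c = 1) (htr : 2 < a + d)
    (hbc : Int.gcd b c = 1)
    (p : ℕ → ℤ) (hp0 : p 0 = 0) (hp1 : p 1 = 1)
    (hrec : ∀ t : ℕ, 1 ≤ t → p (t + 1) = (a + d) * p t - p (t - 1))
    (N' : ℕ → ℕ)
    (hN' : ∀ k : ℕ, 1 ≤ k →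
      IsGreatest {N : ℕ | 0 < N ∧ ∀ i j : Fin 2,
        (N : ℤ) ∣ (((!![a, b; c, d] : Matrix (Fin 2) (Fin 2) ℤ) ^ k - 1) i j)} (N' k)) :
    ∀ k : ℕ, 1 ≤ k → N' k = Int.gcd (p k) (p (k - 1) + 1) := by
  have hspan : Ideal.span {b, c, a - d} = ⊤ :=
    span_triple_eq_top_of_isCoprime (Int.isCoprime_iff_gcd_eq_one.2 hbc) _
  have hrec' (t : ℕ) :
      p (t + 2) = (!![a, b; c, d]).trace * p (t + 1) - (!![a, b; c, d]).det * p t := by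
    simpa [hdet] using hrec (t + 1) t.succ_pos
  rintro (_ | k) hk
  · omega
  · simpa [hdet] using stmt3_general !![a, b; c, d] hspan p hp0 hp1 hrec' k _ (hN' _ hk)
end

section
/- For all integers k ≥ 1 and 0 ≤ s ≤ k − 1, gcd(p_k, p_{k−1} + 1) = gcd(p_{k−s} + p_s, p_{k−(s+1)} + p_{s+1}). -/
/-!
The recurrence `q (s + 2) = τ * q (s + 1) - q s` is unchanged when the sequence is reversed, so
`q s = p (k - s) + p s` satisfies it as long as the indices stay in `[0, k]`. One step of the
recurrence does not change the ideal generated by two consecutive terms, so all these ideals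
agree; over `ℤ` this is an equality of gcds.
-/

section SecondOrderRecurrence

variable {R : Type*} [CommRing R] {τ : R}

theorem span_pair_succ_eq_of_recurrence {q : ℕ → R} {n : ℕ}
    (hq : ∀ s, s + 2 ≤ n → q (s + 2) = τ * q (s + 1) - q s) {s : ℕ} (hs : s < n) :
    Ideal.span {q s, q (s + 1)} = Ideal.span {q 0, q 1} := by
  induction s with
  | zero => rfl
  | succ s ih =>
    calc Ideal.span {q (s + 1), q (s + 2)}
        = Ideal.span {q (s + 1), τ * q (s + 1) + -q s} := by rw [hq s hs, sub_eq_add_neg]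
      _ = Ideal.span {q (s + 1), q s} := by
        rw [Ideal.span_pair_mul_left_add, Ideal.span_pair_neg]
      _ = Ideal.span {q s, q (s + 1)} := Ideal.span_pair_comm
      _ = Ideal.span {q 0, q 1} := ih (Nat.lt_of_succ_lt hs)

theorem add_reflect_recurrence {p : ℕ → R} (hp : ∀ t, p (t + 2) = τ * p (t + 1) - p t)
    {k s : ℕ} (hs : s + 2 ≤ k) :
    p (k - (s + 2)) + p (s + 2) =
      τ * (p (k - (s + 1)) + p (s + 1)) - (p (k - s) + p s) := by
  obtain ⟨m, rfl⟩ := Nat.exists_eq_add_of_le' hs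
  have h_sub_succ : m + (s + 2) - (s + 1) = m + 1 := by lia
  have h_sub : m + (s + 2) - s = m + 2 := by lia
  rw [Nat.add_sub_cancel, h_sub_succ, h_sub, hp m, hp s]
  ring

theorem stmt4_general {p : ℕ → R} (hp : ∀ t, p (t + 2) = τ * p (t + 1) - p t)
    {k s : ℕ} (hs : s < k) :
    Ideal.span {p k + p 0, p (k - 1) + p 1} =
      Ideal.span {p (k - s) + p s, p (k - (s + 1)) + p (s + 1)} :=
  (span_pair_succ_eq_of_recurrence (q := fun s ↦ p (k - s) + p s)
    (fun _ ↦ add_reflect_recurrence hp) hs).symm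

end SecondOrderRecurrence

theorem int_gcd_eq_gcd_of_span_pair_eq {a b c d : ℤ}
    (h : Ideal.span {a, b} = Ideal.span {c, d}) : Int.gcd a b = Int.gcd c d := by
  rw [← span_gcd, ← span_gcd, Ideal.span_singleton_eq_span_singleton,
    ← Int.coe_gcd, ← Int.coe_gcd] at h
  exact Int.associated_iff_natAbs.mp h

/-- Let `τ` be an integer and `p 0 = 0`, `p 1 = 1`,
`p (t+1) = τ * p t - p (t-1)` for `t ≥ 1`. Then for all `k ≥ 1` and `0 ≤ s ≤ k - 1`,
`gcd(p k, p (k-1) + 1) = gcd(p (k-s) + p s, p (k-(s+1)) + p (s+1))`. -/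
theorem stmt4 (τ : ℤ) (p : ℕ → ℤ) (hp0 : p 0 = 0) (hp1 : p 1 = 1)
    (hrec : ∀ t : ℕ, 1 ≤ t → p (t + 1) = τ * p t - p (t - 1)) :
    ∀ k s : ℕ, 1 ≤ k → s ≤ k - 1 →
      Int.gcd (p k) (p (k - 1) + 1)
        = Int.gcd (p (k - s) + p s) (p (k - (s + 1)) + p (s + 1)) := by
  intro k s hk hs
  have span_eq := stmt4_general (fun t ↦ hrec (t + 1) t.succ_pos) (show s < k by lia)
  simpa only [hp0, hp1, add_zero] using int_gcd_eq_gcd_of_span_pair_eq span_eq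
end

section
/- For every integer k ≥ 1, N'_{2k} = 2·p_k. -/
/-!
Let `B` be the adjugate of `A`; as `det A = 1`, it is the inverse of `A`, and `A + B = (tr A) I`.
The recurrence for `p` is therefore the one satisfied by `A ^ k - B ^ k`, which gives
`A ^ k - B ^ k = p k • (A - B)` and
`A ^ (2 * k) - 1 = A ^ k * (A ^ k - B ^ k) = p k • (A ^ k * (A - B))`.
Multiplying by the invertible matrix `A ^ k` does not change the common divisors of the entries,
so those of `A ^ (2 * k) - 1` are the divisors of `p k` times the gcd of the entries `a - d`, `2 b`,
`2 c` of `A - B`.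
-/

section LucasSequence

variable {R S : Type*} [CommRing R] [Ring S] [Algebra R S] {t : R} {p : ℕ → R}

theorem pow_sub_pow_eq_smul_sub_of_mul_eq_one {x y : S} (hp0 : p 0 = 0) (hp1 : p 1 = 1)
    (hrec : ∀ n, p (n + 2) = t * p (n + 1) - p n)
    (hxy : x * y = 1) (hyx : y * x = 1) (hadd : x + y = t • 1) (n : ℕ) :
    x ^ n - y ^ n = p n • (x - y) := by
  induction n using Nat.twoStepInduction with
  | zero => simp [hp0]
  | one => simp [hp1]
  | more n ih ih_succ =>
    have hxy_pow : x * y ^ (n + 1) = y ^ n := by rw [pow_succ', ← mul_assoc, hxy, one_mul]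
    have hyx_pow : y * x ^ (n + 1) = x ^ n := by rw [pow_succ', ← mul_assoc, hyx, one_mul]
    calc x ^ (n + 2) - y ^ (n + 2)
        = (x + y) * (x ^ (n + 1) - y ^ (n + 1)) - (x ^ n - y ^ n) := by
          rw [add_mul, mul_sub, mul_sub, hxy_pow, hyx_pow, ← pow_succ', ← pow_succ']
          abel
      _ = t • (p (n + 1) • (x - y)) - p n • (x - y) := by
          rw [hadd, ih, ih_succ, smul_one_mul]
      _ = p (n + 2) • (x - y) := by rw [hrec, sub_smul, mul_smul]

theorem pow_two_mul_sub_one_eq_smul_of_mul_eq_one {x y : S} (hp0 : p 0 = 0) (hp1 : p 1 = 1)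
    (hrec : ∀ n, p (n + 2) = t * p (n + 1) - p n)
    (hxy : x * y = 1) (hyx : y * x = 1) (hadd : x + y = t • 1) (n : ℕ) :
    x ^ (2 * n) - 1 = x ^ n * (p n • (x - y)) := by
  rw [← pow_sub_pow_eq_smul_sub_of_mul_eq_one hp0 hp1 hrec hxy hyx hadd, mul_sub,
    pow_mul_pow_eq_one n hxy, ← pow_add, two_mul]

theorem strictMono_of_two_le_of_recurrence [LinearOrder R] [IsStrictOrderedRing R]
    (hp0 : p 0 = 0) (hp1 : p 1 = 1) (hrec : ∀ n, p (n + 2) = t * p (n + 1) - p n)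
    (ht : 2 ≤ t) : StrictMono p := by
  have nonneg_and_lt : ∀ n, 0 ≤ p n ∧ p n < p (n + 1) := by
    intro n
    induction n with
    | zero => simp [hp0, hp1]
    | succ n ih =>
      have hnonneg : 0 ≤ p (n + 1) := ih.1.trans ih.2.le
      refine ⟨hnonneg, ?_⟩
      rw [hrec]
      linarith [mul_le_mul_of_nonneg_right ht hnonneg, ih.2]
  exact strictMono_nat_of_lt_succ fun n ↦ (nonneg_and_lt n).2

end LucasSequence

section MatrixEntries

variable {R : Type*} [CommSemiring R]

theorem dvd_matrix_mul_apply {m n o : Type*} [Fintype n] {r : R} {X : Matrix n o R}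
    (M : Matrix m n R) (hX : ∀ i j, r ∣ X i j) (i : m) (j : o) : r ∣ (M * X) i j :=
  Finset.dvd_sum fun l _ ↦ (hX l j).mul_left (M i l)

theorem dvd_matrix_mul_apply_iff_of_isUnit {n o : Type*} [Fintype n] [DecidableEq n] {r : R}
    {M : Matrix n n R} (hM : IsUnit M) (X : Matrix n o R) :
    (∀ i j, r ∣ (M * X) i j) ↔ ∀ i j, r ∣ X i j := by
  refine ⟨fun h ↦ ?_, dvd_matrix_mul_apply M⟩
  obtain ⟨M, rfl⟩ := hM
  simpa [← Matrix.mul_assoc] using dvd_matrix_mul_apply (↑M⁻¹ : Matrix n n R) h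

end MatrixEntries

section FinTwo

variable {R : Type*} [CommRing R]

theorem add_adjugate_fin_two (A : Matrix (Fin 2) (Fin 2) R) :
    A + A.adjugate = A.trace • 1 := by
  rw [Matrix.adjugate_fin_two, Matrix.trace_fin_two]
  ext i j
  fin_cases i <;> fin_cases j <;> simp [add_comm]

theorem dvd_pow_two_mul_sub_one_apply_iff {A : Matrix (Fin 2) (Fin 2) R} (hA : A.det = 1)
    {p : ℕ → R} (hp0 : p 0 = 0) (hp1 : p 1 = 1)
    (hrec : ∀ n, p (n + 2) = A.trace * p (n + 1) - p n) (r : R) (k : ℕ) :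
    (∀ i j, r ∣ (A ^ (2 * k) - 1) i j) ↔ ∀ i j, r ∣ p k * (A - A.adjugate) i j := by
  have hmul : A * A.adjugate = 1 := by rw [Matrix.mul_adjugate, hA, one_smul]
  have hmul' : A.adjugate * A = 1 := by rw [Matrix.adjugate_mul, hA, one_smul]
  have hunit : IsUnit (A ^ k) := (IsUnit.of_mul_eq_one _ hmul).pow k
  rw [pow_two_mul_sub_one_eq_smul_of_mul_eq_one hp0 hp1 hrec hmul hmul' (add_adjugate_fin_two A),
    dvd_matrix_mul_apply_iff_of_isUnit hunit]
  rfl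

end FinTwo

theorem dvd_mul_coe_gcd_iff {n m x y : ℤ} : n ∣ m * Int.gcd x y ↔ n ∣ m * x ∧ n ∣ m * y := by
  rw [← Int.dvd_coe_gcd_iff, Int.gcd_mul_left, Int.natCast_mul, Int.natCast_natAbs]
  exact ((Associated.refl m).abs_right.mul_right _).dvd_iff_dvd_right

theorem dvd_mul_sub_adjugate_apply_iff (a b c d m n : ℤ) :
    (∀ i j, n ∣ m * (!![a, b; c, d] - (!![a, b; c, d] : Matrix _ _ ℤ).adjugate) i j) ↔
      n ∣ m * Int.gcd (a - d) (2 * Int.gcd b c) := by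
  have hsub : !![a, b; c, d] - (!![a, b; c, d] : Matrix _ _ ℤ).adjugate =
      !![a - d, 2 * b; 2 * c, -(a - d)] := by
    simp [Matrix.adjugate_fin_two_of, two_mul]
  rw [hsub, dvd_mul_coe_gcd_iff, ← mul_assoc, dvd_mul_coe_gcd_iff, mul_assoc, mul_assoc]
  simp only [Fin.forall_fin_two, Matrix.of_apply, Matrix.cons_val_zero, Matrix.cons_val_one,
    Matrix.cons_val', Matrix.cons_val_fin_one, mul_neg, dvd_neg]
  tauto

theorem eq_natAbs_of_isGreatest_dvd {z : ℤ} {n : ℕ}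
    (hn : IsGreatest {N : ℕ | 0 < N ∧ (N : ℤ) ∣ z} n) : n = z.natAbs := by
  have hz : z ≠ 0 := by
    rintro rfl
    exact n.lt_succ_self.not_ge (hn.2 ⟨n.succ_pos, dvd_zero _⟩)
  exact hn.unique
    ⟨⟨Int.natAbs_pos.2 hz, Int.natAbs_dvd.2 dvd_rfl⟩,
      fun N hN ↦ Nat.le_of_dvd (Int.natAbs_pos.2 hz) (Int.natCast_dvd.1 hN.2)⟩

theorem gcd_sub_two_mul_gcd_eq_two {a b c d : ℤ} (heven : Even (a + d))
    (hbc : Int.gcd b c = 1) : Int.gcd (a - d) (2 * Int.gcd b c) = 2 := by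
  have hdvd : 2 ∣ a - d := (Int.even_sub.2 (Int.even_add.1 heven)).two_dvd
  rw [hbc, Nat.cast_one, mul_one]
  exact_mod_cast Int.gcd_eq_right zero_le_two hdvd

theorem stmt5_general (a b c d : ℤ) (hdet : a * d - b * c = 1)
    (p : ℕ → ℤ) (hp0 : p 0 = 0) (hp1 : p 1 = 1)
    (hrec : ∀ t : ℕ, 1 ≤ t → p (t + 1) = (a + d) * p t - p (t - 1)) (k N : ℕ)
    (hN : IsGreatest {n : ℕ | 0 < n ∧ ∀ i j : Fin 2,
      (n : ℤ) ∣ (((!![a, b; c, d] : Matrix (Fin 2) (Fin 2) ℤ) ^ (2 * k) - 1) i j)} N) :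
    (N : ℤ) = |p k| * Int.gcd (a - d) (2 * Int.gcd b c) := by
  have hA : (!![a, b; c, d] : Matrix (Fin 2) (Fin 2) ℤ).det = 1 := by
    rw [Matrix.det_fin_two_of, hdet]
  have hrec' (n : ℕ) : p (n + 2) =
      (!![a, b; c, d] : Matrix (Fin 2) (Fin 2) ℤ).trace * p (n + 1) - p n := by
    rw [Matrix.trace_fin_two_of]
    exact hrec (n + 1) n.succ_pos
  simp only [dvd_pow_two_mul_sub_one_apply_iff hA hp0 hp1 hrec',
    dvd_mul_sub_adjugate_apply_iff] at hN
  rw [eq_natAbs_of_isGreatest_dvd hN, Int.natCast_natAbs, abs_mul, Nat.abs_cast]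

/-- With `A = !![a, b; c, d]` of determinant 1, trace `a + d` even and `> 2`,
`gcd(b, c) = 1`, `p` the recurrence sequence, and `N' k` the largest positive integer `N`
such that `A^k ≡ I (mod N)` entrywise, we have `N' (2k) = 2 * p k` for every `k ≥ 1`. -/
theorem stmt5 (a b c d : ℤ) (hdet : a * d - b * c = 1)
    (heven : Even (a + d)) (htr : 2 < a + d) (hbc : Int.gcd b c = 1)
    (p : ℕ → ℤ) (hp0 : p 0 = 0) (hp1 : p 1 = 1)
    (hrec : ∀ t : ℕ, 1 ≤ t → p (t + 1) = (a + d) * p t - p (t - 1))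
    (N' : ℕ → ℕ)
    (hN' : ∀ k : ℕ, 1 ≤ k →
      IsGreatest {N : ℕ | 0 < N ∧ ∀ i j : Fin 2,
        (N : ℤ) ∣ (((!![a, b; c, d] : Matrix (Fin 2) (Fin 2) ℤ) ^ k - 1) i j)} (N' k)) :
    ∀ k : ℕ, 1 ≤ k → (N' (2 * k) : ℤ) = 2 * p k := by
  intro k hk
  have hpk : 0 < p k := hp0 ▸ strictMono_of_two_le_of_recurrence hp0 hp1
    (fun n ↦ hrec (n + 1) n.succ_pos) htr.le hk
  rw [stmt5_general a b c d hdet p hp0 hp1 hrec k _ (hN' (2 * k) (by lia)),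
    gcd_sub_two_mul_gcd_eq_two heven hbc, abs_of_pos hpk, mul_comm, Nat.cast_ofNat]
end

section
/- For every integer k ≥ 0, N'_{2k+1} = p_k + p_{k+1}. -/
/-!
Put `s = p k + p (k + 1)`. Since `A * A = (tr A) • A - 1`, the powers of `A` are
`A ^ (k + 1) = p (k + 1) • A - p k • 1`, and `A ^ k` has inverse `p (k + 1) • 1 - p k • A`.
Subtracting, `A ^ (k + 1) - A ^ (-k) = s • (A - 1)`, that is
`A ^ (2 * k + 1) - 1 = A ^ k * (s • (A - 1))`. Multiplying by the invertible matrix `A ^ k` does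
not change the gcd of the entries, so the gcd of the entries of `A ^ (2 * k + 1) - 1` is `|s|` times
that of `A - 1`, and the latter divides `gcd b c = 1`.
-/

/-- `p` is the Lucas sequence of the first kind `U_n(t, 1)`: the sequence `0, 1, t, t ^ 2 - 1, …`
which gives the coefficients of the powers of an element satisfying `x * x = t • x - 1`. -/
structure IsLucasSequence {R : Type*} [CommRing R] (t : R) (p : ℕ → R) : Prop where
  zero : p 0 = 0
  one : p 1 = 1
  add_two : ∀ n, p (n + 2) = t * p (n + 1) - p n

namespace IsLucasSequence

section Powers

variable {R S : Type*} [CommRing R] [Ring S] [Algebra R S] {t : R} {p : ℕ → R} {x : S}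

theorem pow_succ_eq (hp : IsLucasSequence t p) (hx : x * x = t • x - 1) (n : ℕ) :
    x ^ (n + 1) = p (n + 1) • x - p n • 1 := by
  induction n with
  | zero => simp [hp.zero, hp.one]
  | succ n ih =>
    rw [pow_succ, ih, sub_mul, smul_mul_assoc, hx, smul_one_mul, hp.add_two]
    module

theorem pow_mul_eq_one (hp : IsLucasSequence t p) (hx : x * x = t • x - 1) (n : ℕ) :
    x ^ n * (p (n + 1) • 1 - p n • x) = 1 := by
  induction n with
  | zero => simp [hp.zero, hp.one]
  | succ n ih =>
    have shift : x * (p (n + 2) • 1 - p (n + 1) • x) = p (n + 1) • 1 - p n • x := by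
      rw [mul_sub, mul_smul_comm, mul_smul_comm, mul_one, hx, hp.add_two]
      module
    rw [pow_succ, mul_assoc, shift, ih]

theorem pow_two_mul_add_one_sub_one (hp : IsLucasSequence t p) (hx : x * x = t • x - 1) (k : ℕ) :
    x ^ (2 * k + 1) - 1 = x ^ k * ((p k + p (k + 1)) • (x - 1)) :=
  calc
    x ^ (2 * k + 1) - 1 = x ^ k * x ^ (k + 1) - x ^ k * (p (k + 1) • 1 - p k • x) := by
      rw [hp.pow_mul_eq_one hx, ← pow_add]
      ring_nf
    _ = x ^ k * ((p k + p (k + 1)) • (x - 1)) := by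
      rw [← mul_sub, hp.pow_succ_eq hx]
      congr 1
      module

end Powers

section Order

variable {R : Type*} [CommRing R] [LinearOrder R] [IsStrictOrderedRing R] {t : R} {p : ℕ → R}

theorem nonneg_and_lt_succ (hp : IsLucasSequence t p) (ht : 2 ≤ t) (n : ℕ) :
    0 ≤ p n ∧ p n < p (n + 1) := by
  induction n with
  | zero => simp [hp.zero, hp.one]
  | succ n ih =>
    obtain ⟨hnonneg, hlt⟩ := ih
    have hsucc : 0 ≤ p (n + 1) := hnonneg.trans hlt.le
    refine ⟨hsucc, ?_⟩
    rw [hp.add_two]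
    linarith [mul_le_mul_of_nonneg_right ht hsucc]

theorem add_succ_pos (hp : IsLucasSequence t p) (ht : 2 ≤ t) (n : ℕ) : 0 < p n + p (n + 1) := by
  obtain ⟨hnonneg, hlt⟩ := hp.nonneg_and_lt_succ ht n
  linarith

end Order

end IsLucasSequence

/-- The greatest common divisor of the entries of an integer matrix. For `M = B - 1` it is the
largest modulus `N` with `B ≡ 1 (mod N)` entrywise, unless `B = 1`, where it is `0`. -/
def entryGcd {m n : Type*} [Fintype m] [Fintype n] (M : Matrix m n ℤ) : ℕ :=
  Finset.univ.gcd fun ij : m × n => (M ij.1 ij.2).natAbs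

section EntryGcd

variable {m n : Type*} [Fintype m] [Fintype n]

theorem dvd_entryGcd_iff {M : Matrix m n ℤ} {N : ℕ} :
    N ∣ entryGcd M ↔ ∀ i j, (N : ℤ) ∣ M i j := by
  simp [entryGcd, Finset.dvd_gcd_iff, Int.natCast_dvd]

theorem entryGcd_smul (s : ℤ) (M : Matrix m n ℤ) :
    entryGcd (s • M) = s.natAbs * entryGcd M := by
  simp [entryGcd, Int.natAbs_mul, Finset.gcd_mul_left]

theorem entryGcd_dvd_entryGcd_mul {l : Type*} [Fintype l] (U : Matrix l m ℤ) (M : Matrix m n ℤ) :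
    entryGcd M ∣ entryGcd (U * M) :=
  dvd_entryGcd_iff.2 fun _ j =>
    Finset.dvd_sum fun r _ => (dvd_entryGcd_iff.1 dvd_rfl r j).mul_left _

theorem entryGcd_isUnit_mul [DecidableEq m] {U : Matrix m m ℤ} (hU : IsUnit U)
    (M : Matrix m n ℤ) : entryGcd (U * M) = entryGcd M := by
  obtain ⟨V, -, hVU⟩ := isUnit_iff_exists.1 hU
  refine Nat.dvd_antisymm ?_ (entryGcd_dvd_entryGcd_mul U M)
  simpa [← Matrix.mul_assoc, hVU] using entryGcd_dvd_entryGcd_mul V (U * M)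

theorem entryGcd_eq_one_of_gcd_eq_one {M : Matrix m n ℤ} {i i' : m} {j j' : n}
    (h : Int.gcd (M i j) (M i' j') = 1) : entryGcd M = 1 := by
  have hdvd := dvd_entryGcd_iff.1 (dvd_refl (entryGcd M))
  exact Nat.dvd_one.1 (h ▸ Int.dvd_gcd (hdvd i j) (hdvd i' j'))

theorem eq_entryGcd_of_isGreatest {M : Matrix m n ℤ} {N : ℕ}
    (hN : IsGreatest {N : ℕ | 0 < N ∧ ∀ i j, (N : ℤ) ∣ M i j} N) : N = entryGcd M := by
  simp only [← dvd_entryGcd_iff] at hN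
  obtain ⟨⟨-, hdvd⟩, hmax⟩ := hN
  have hpos : 0 < entryGcd M := by
    by_contra! hzero
    have : N + 1 ≤ N := hmax ⟨N.succ_pos, by simp [Nat.le_zero.1 hzero]⟩
    omega
  exact le_antisymm (Nat.le_of_dvd hpos hdvd) (hmax ⟨hpos, dvd_rfl⟩)

end EntryGcd

theorem mul_self_eq_trace_smul_sub_one {R : Type*} [CommRing R] {A : Matrix (Fin 2) (Fin 2) R}
    (hdet : A.det = 1) : A * A = A.trace • A - 1 := by
  nontriviality R
  have cayley_hamilton := A.aeval_self_charpoly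
  simp only [A.charpoly_fin_two, hdet, map_add, map_sub, map_mul, map_pow, Polynomial.aeval_X,
    Polynomial.aeval_C, Algebra.algebraMap_eq_smul_one, smul_one_mul, one_smul] at cayley_hamilton
  rw [← sub_eq_zero, ← cayley_hamilton, sq]
  abel

theorem entryGcd_pow_two_mul_add_one_sub_one {A : Matrix (Fin 2) (Fin 2) ℤ} (hdet : A.det = 1)
    {p : ℕ → ℤ} (hp : IsLucasSequence A.trace p) (k : ℕ) :
    entryGcd (A ^ (2 * k + 1) - 1) = (p k + p (k + 1)).natAbs * entryGcd (A - 1) := by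
  have hA : IsUnit A := A.isUnit_iff_isUnit_det.2 (hdet ▸ isUnit_one)
  rw [hp.pow_two_mul_add_one_sub_one (mul_self_eq_trace_smul_sub_one hdet),
    entryGcd_isUnit_mul (hA.pow k), entryGcd_smul]

theorem stmt6_general {A : Matrix (Fin 2) (Fin 2) ℤ} (hdet : A.det = 1)
    {p : ℕ → ℤ} (hp : IsLucasSequence A.trace p) {N' : ℕ → ℕ}
    (hN' : ∀ k : ℕ, 1 ≤ k →
      IsGreatest {N : ℕ | 0 < N ∧ ∀ i j : Fin 2, (N : ℤ) ∣ (A ^ k - 1) i j} (N' k)) (k : ℕ) :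
    (N' (2 * k + 1) : ℤ) = |p k + p (k + 1)| * N' 1 := by
  rw [eq_entryGcd_of_isGreatest (hN' (2 * k + 1) (by omega)),
    eq_entryGcd_of_isGreatest (hN' 1 le_rfl), pow_one,
    entryGcd_pow_two_mul_add_one_sub_one hdet hp, Nat.cast_mul, Int.natCast_natAbs]

/-- With `A = !![a, b; c, d]` of determinant 1, trace `a + d` even and `> 2`,
`gcd(b, c) = 1`, `p` the recurrence sequence, and `N' k` the largest positive integer `N`
such that `A^k ≡ I (mod N)` entrywise, we have `N' (2k+1) = p k + p (k+1)` for every `k ≥ 0`. -/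
theorem stmt6 (a b c d : ℤ) (hdet : a * d - b * c = 1)
    (heven : Even (a + d)) (htr : 2 < a + d) (hbc : Int.gcd b c = 1)
    (p : ℕ → ℤ) (hp0 : p 0 = 0) (hp1 : p 1 = 1)
    (hrec : ∀ t : ℕ, 1 ≤ t → p (t + 1) = (a + d) * p t - p (t - 1))
    (N' : ℕ → ℕ)
    (hN' : ∀ k : ℕ, 1 ≤ k →
      IsGreatest {N : ℕ | 0 < N ∧ ∀ i j : Fin 2,
        (N : ℤ) ∣ (((!![a, b; c, d] : Matrix (Fin 2) (Fin 2) ℤ) ^ k - 1) i j)} (N' k)) :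
    ∀ k : ℕ, (N' (2 * k + 1) : ℤ) = p k + p (k + 1) := by
  intro k
  have hp : IsLucasSequence (!![a, b; c, d] : Matrix (Fin 2) (Fin 2) ℤ).trace p :=
    ⟨hp0, hp1, fun n => by simpa using hrec (n + 1) (by omega)⟩
  have hN'_one : N' 1 = 1 := by
    rw [eq_entryGcd_of_isGreatest (hN' 1 le_rfl)]
    exact entryGcd_eq_one_of_gcd_eq_one (i := 0) (j := 1) (i' := 1) (j' := 0) (by simpa using hbc)
  have hpos : 0 < p k + p (k + 1) := hp.add_succ_pos (by simpa using htr.le) k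
  rw [stmt6_general (by simpa using hdet) hp hN' k, hN'_one, abs_of_pos hpos, Nat.cast_one, mul_one]
end

section
/- For every integer k ≥ 1, T_{N'_k} = k; that is, the least positive integer t with A^t ≡ I (mod N'_k) is exactly k. -/
/-!
Suppose `A ^ k ≡ 1` and `A ^ t ≡ 1` modulo `N = N' k`, and let `B = A ^ gcd t k`, so that `B ≡ 1`
modulo `N` and `A ^ k = B ^ j`. Like `A`, the matrix `B` has determinant `1` and an even trace of
absolute value `> 2`. If `j ≠ 1`, then `B ^ j ≡ 1` modulo a proper multiple of `N`, contradicting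
the maximality of `N`:

* if `j = 2 * n + 1`, then `B ^ j - 1 = (B - 1) * B ^ n * ∑ B ^ i` with `i` from `-n` to `n`, and
  the sum is an integer scalar because each `B ^ i + B ^ (-i)` is; its absolute value is `1` for
  `n = 0` and strictly increases with `n`;
* if `j` is even, then `B ^ j - 1` is a multiple of `B ^ 2 - 1 = 2 * (m * (B - 1) + (m - 1))`, where
  `m` is half the trace, and `N ∣ m - 1` because `N ^ 2` divides `det (B - 1) = -2 * (m - 1)`.

Hence `gcd t k = k`, so `k ≤ t`.
-/

theorem strictMono_abs_of_recurrence {R : Type*} [CommRing R] [LinearOrder R]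
    [IsStrictOrderedRing R] {t : R} (ht : 2 ≤ |t|) {u : ℕ → R}
    (hu : ∀ n, u (n + 2) = t * u (n + 1) - u n) (h01 : |u 0| < |u 1|) :
    StrictMono fun n ↦ |u n| := by
  refine strictMono_nat_of_lt_succ fun n ↦ ?_
  induction n with
  | zero => exact h01
  | succ n ih =>
    calc |u (n + 1)| < 2 * |u (n + 1)| - |u n| := by linarith
      _ ≤ |t| * |u (n + 1)| - |u n| := by gcongr
      _ = |t * u (n + 1)| - |u n| := by rw [abs_mul]
      _ ≤ |t * u (n + 1) - u n| := abs_sub_abs_le_abs_sub _ _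
      _ = |u (n + 2)| := by rw [hu]

theorem dvd_of_sq_dvd_two_mul {h m : ℤ} (hm : h ^ 2 ∣ 2 * m) : h ∣ m := by
  obtain ⟨y, hy⟩ := hm
  have hEven : Even (h ^ 2 * y) := hy ▸ even_two_mul m
  rcases Int.even_mul.mp hEven with hh | ⟨z, rfl⟩
  · obtain ⟨g, rfl⟩ := (Int.even_pow.mp hh).1
    exact ⟨g * y, by linarith⟩
  · exact ⟨h * z, by linarith⟩

/-- The Dirichlet kernel `z⁻ⁿ + ⋯ + z⁻¹ + 1 + z + ⋯ + zⁿ` as a function of `t = z + z⁻¹`, given by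
its three-term recurrence so that no inverse `z⁻¹` is needed. -/
def dirichletKernel (t : ℤ) : ℕ → ℤ
  | 0 => 1
  | 1 => t + 1
  | n + 2 => t * dirichletKernel t (n + 1) - dirichletKernel t n

theorem one_lt_abs_dirichletKernel {t : ℤ} (ht : 2 < |t|) {n : ℕ} (hn : 0 < n) :
    1 < |dirichletKernel t n| := by
  have h01 : |dirichletKernel t 0| < |dirichletKernel t 1| := by
    simp only [dirichletKernel, abs_one]
    grind
  simpa [dirichletKernel] using strictMono_abs_of_recurrence ht.le (fun _ ↦ rfl) h01 hn

section Ring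

variable {R : Type*} [Ring R] {x : R} {t : ℤ}

theorem pow_two_mul_add_one_sub_one (hx : x ^ 2 = t * x - 1) (n : ℕ) :
    x ^ (2 * n + 1) - 1 = dirichletKernel t n * ((x - 1) * x ^ n) := by
  have hpow (m : ℕ) : (t : R) * x ^ (m + 1) = x ^ (m + 2) + x ^ m := by
    rw [pow_succ', ← mul_assoc, ← sub_add_cancel (t * x) 1, ← hx, add_mul, one_mul, ← pow_add,
      add_comm 2 m]
  induction n using Nat.twoStepInduction with
  | zero => simp [dirichletKernel]
  | one =>
    calc x ^ 3 - 1 = t * x ^ 2 - t * x ^ 1 + x ^ 2 - x := by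
          rw [hpow 1, hpow 0]
          noncomm_ring
      _ = (t + 1 : ℤ) * ((x - 1) * x ^ 1) := by
          push_cast
          noncomm_ring
  | more n ih₀ ih₁ =>
    rw [show 2 * (n + 1) + 1 = 2 * n + 3 by ring] at ih₁
    calc x ^ (2 * n + 5) - 1
        = t * x ^ (2 * n + 4) - t * x ^ 1 - (x ^ (2 * n + 3) - x ^ 2) := by
          rw [hpow (2 * n + 3), hpow 0]
          noncomm_ring
      _ = t * ((x ^ (2 * n + 3) - 1) * x) - (x ^ (2 * n + 1) - 1) * x ^ 2 := by
          noncomm_ring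
      _ = dirichletKernel t (n + 2) * ((x - 1) * x ^ (n + 2)) := by
          rw [ih₀, ih₁, dirichletKernel, Int.cast_sub, Int.cast_mul]
          noncomm_ring

theorem dirichletKernel_mul_dvd_pow_sub_one (hx : x ^ 2 = t * x - 1) {h : ℤ}
    (hdvd : (h : R) ∣ x - 1) (n : ℕ) :
    ((dirichletKernel t n * h : ℤ) : R) ∣ x ^ (2 * n + 1) - 1 := by
  rw [pow_two_mul_add_one_sub_one hx, Int.cast_mul]
  exact mul_dvd_mul_left _ (hdvd.mul_right _)

theorem two_mul_dvd_pow_sub_one {m : ℤ} (hx : x ^ 2 = (2 * m : ℤ) * x - 1) {h : ℤ}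
    (hdvd : (h : R) ∣ x - 1) (hm : h ∣ m - 1) (n : ℕ) :
    ((2 * h : ℤ) : R) ∣ x ^ (2 * n) - 1 := by
  have hsq : x ^ 2 - 1 = (2 : ℤ) * ((x - 1) * m + (m - 1 : ℤ)) := by
    rw [hx, ← (Int.cast_commute m (x - 1)).eq]
    push_cast
    noncomm_ring
  have hdvd_sq : ((2 * h : ℤ) : R) ∣ x ^ 2 - 1 := by
    rw [hsq, Int.cast_mul]
    exact mul_dvd_mul_left _ (dvd_add (hdvd.mul_right _) (map_dvd (Int.castRingHom R) hm))
  have hgeom := (Commute.one_right (x ^ 2)).sub_dvd_pow_sub_pow n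
  rw [one_pow, ← pow_mul] at hgeom
  exact hdvd_sq.trans hgeom

end Ring

section Matrix

variable {n : Type*} [Fintype n] [DecidableEq n]

theorem intCast_dvd_matrix_iff {h : ℤ} {X : Matrix n n ℤ} :
    (h : Matrix n n ℤ) ∣ X ↔ ∀ i j, h ∣ X i j := by
  refine ⟨?_, fun hX ↦ ?_⟩
  · rintro ⟨Y, rfl⟩ i j
    simp [← zsmul_eq_mul]
  · choose Y hY using hX
    exact ⟨Matrix.of Y, by ext i j; simpa [← zsmul_eq_mul] using hY i j⟩

theorem natCast_dvd_matrix_sub_one_iff {N : ℕ} {X : Matrix n n ℤ} :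
    ((N : ℤ) : Matrix n n ℤ) ∣ X - 1 ↔ (Int.castRingHom (ZMod N)).mapMatrix X = 1 := by
  rw [intCast_dvd_matrix_iff, ← sub_eq_zero, ← map_one (Int.castRingHom (ZMod N)).mapMatrix,
    ← map_sub, ← Matrix.ext_iff]
  simp only [RingHom.mapMatrix_apply, Matrix.map_apply, Matrix.zero_apply, eq_intCast,
    ZMod.intCast_zmod_eq_zero_iff_dvd]

theorem natCast_dvd_matrix_pow_gcd_sub_one {N : ℕ} {X : Matrix n n ℤ} {s t : ℕ}
    (hs : ((N : ℤ) : Matrix n n ℤ) ∣ X ^ s - 1) (ht : ((N : ℤ) : Matrix n n ℤ) ∣ X ^ t - 1) :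
    ((N : ℤ) : Matrix n n ℤ) ∣ X ^ s.gcd t - 1 := by
  rw [natCast_dvd_matrix_sub_one_iff, map_pow] at hs ht ⊢
  exact pow_gcd_eq_one.mpr ⟨hs, ht⟩

end Matrix

section FinTwo

variable {R : Type*} [CommRing R] {A : Matrix (Fin 2) (Fin 2) R}

theorem sq_eq_trace_smul_sub_one (hdet : A.det = 1) :
    A ^ 2 = A.trace • A - 1 := by
  nontriviality R
  have hCayleyHamilton := A.aeval_self_charpoly
  simp only [A.charpoly_fin_two, hdet, map_add, map_sub, map_mul, map_pow, Polynomial.aeval_X,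
    Polynomial.aeval_C, map_one, ← Algebra.smul_def] at hCayleyHamilton
  rw [← sub_eq_zero, ← hCayleyHamilton]
  abel

theorem trace_pow_add_two (hdet : A.det = 1) (n : ℕ) :
    (A ^ (n + 2)).trace = A.trace * (A ^ (n + 1)).trace - (A ^ n).trace := by
  rw [pow_add, sq_eq_trace_smul_sub_one hdet, mul_sub, mul_smul_comm, ← pow_succ, mul_one,
    Matrix.trace_sub, Matrix.trace_smul, smul_eq_mul]

theorem even_trace_pow (hdet : A.det = 1) (heven : Even A.trace) (n : ℕ) :
    Even (A ^ n).trace := by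
  induction n using Nat.twoStepInduction with
  | zero => simp
  | one => simpa
  | more n ih₀ _ =>
    rw [trace_pow_add_two hdet]
    exact (heven.mul_right _).sub ih₀

end FinTwo

section FinTwoInt

variable {A : Matrix (Fin 2) (Fin 2) ℤ}

theorem two_lt_abs_trace_pow (hdet : A.det = 1) (htr : 2 < |A.trace|) {n : ℕ} (hn : 0 < n) :
    2 < |(A ^ n).trace| := by
  simpa using strictMono_abs_of_recurrence (u := fun n ↦ (A ^ n).trace) htr.le
    (trace_pow_add_two hdet) (by simpa) hn

theorem sq_dvd_trace_sub_two (hdet : A.det = 1) {h : ℤ}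
    (hdvd : (h : Matrix (Fin 2) (Fin 2) ℤ) ∣ A - 1) : h ^ 2 ∣ A.trace - 2 := by
  obtain ⟨Y, hY⟩ := hdvd
  have hdet_sub : (A - 1).det = 2 - A.trace := by
    rw [Matrix.det_fin_two] at hdet ⊢
    simp only [Matrix.sub_apply, Matrix.one_apply_eq, Matrix.one_apply_ne zero_ne_one,
      Matrix.one_apply_ne one_ne_zero, Matrix.trace_fin_two]
    linarith
  have hdet_mul : (A - 1).det = h ^ 2 * Y.det := by
    rw [hY, ← zsmul_eq_mul, Matrix.det_smul_of_tower]
    simp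
  exact ⟨-Y.det, by linarith⟩

theorem exists_one_lt_mul_dvd_pow_sub_one (hdet : A.det = 1) (heven : Even A.trace)
    (htr : 2 < |A.trace|) {h : ℤ} (hdvd : (h : Matrix (Fin 2) (Fin 2) ℤ) ∣ A - 1) {j : ℕ}
    (hj : j ≠ 1) :
    ∃ q : ℕ, 1 < q ∧ ((q * h : ℤ) : Matrix (Fin 2) (Fin 2) ℤ) ∣ A ^ j - 1 := by
  have hsq : A ^ 2 = (A.trace : Matrix (Fin 2) (Fin 2) ℤ) * A - 1 := by
    rw [sq_eq_trace_smul_sub_one hdet, zsmul_eq_mul]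
  obtain ⟨n, rfl | rfl⟩ := j.even_or_odd'
  · obtain ⟨m, hm⟩ := heven.two_dvd
    have hdvd_half : h ∣ m - 1 := dvd_of_sq_dvd_two_mul <| by
      simpa [hm, mul_sub] using sq_dvd_trace_sub_two hdet hdvd
    exact ⟨2, by norm_num, two_mul_dvd_pow_sub_one (hm ▸ hsq) hdvd hdvd_half n⟩
  · refine ⟨(dirichletKernel A.trace n).natAbs, ?_, ?_⟩
    · zify
      exact one_lt_abs_dirichletKernel htr (by lia)
    · exact (map_dvd (Int.castRingHom _) <| mul_dvd_mul_right (Int.natAbs_dvd.mpr dvd_rfl) h).trans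
        (dirichletKernel_mul_dvd_pow_sub_one hsq hdvd n)

end FinTwoInt

theorem stmt8_general {A : Matrix (Fin 2) (Fin 2) ℤ} (hdet : A.det = 1) (heven : Even A.trace)
    (htr : 2 < |A.trace|) {k N : ℕ} (hk : 0 < k)
    (hN : IsGreatest {N : ℕ | 0 < N ∧ ∀ i j, (N : ℤ) ∣ (A ^ k - 1) i j} N) :
    IsLeast {t : ℕ | 0 < t ∧ ∀ i j, (N : ℤ) ∣ (A ^ t - 1) i j} k := by
  simp only [← intCast_dvd_matrix_iff] at hN ⊢
  obtain ⟨⟨hNpos, hNk⟩, hNmax⟩ := hN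
  refine ⟨⟨hk, hNk⟩, fun t ⟨htpos, hNt⟩ ↦ ?_⟩
  have hgpos : 0 < t.gcd k := Nat.gcd_pos_of_pos_right t hk
  obtain ⟨j, hj⟩ := Nat.gcd_dvd_right t k
  suffices j = 1 by
    rw [this, mul_one] at hj
    exact hj ▸ Nat.gcd_le_left k htpos
  by_contra hj1
  obtain ⟨q, hq, hqdvd⟩ := exists_one_lt_mul_dvd_pow_sub_one (by rw [Matrix.det_pow, hdet, one_pow])
    (even_trace_pow hdet heven _) (two_lt_abs_trace_pow hdet htr hgpos)
    (natCast_dvd_matrix_pow_gcd_sub_one hNt hNk) hj1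
  rw [← pow_mul, ← hj] at hqdvd
  have hle : q * N ≤ N := hNmax ⟨by positivity, by exact_mod_cast hqdvd⟩
  nlinarith

/-- With `A = !![a, b; c, d]` of determinant 1, trace `a + d` even and `> 2`,
`gcd(b, c) = 1`, `N' k` the largest positive integer `N` such that `A^k ≡ I (mod N)`
entrywise, and `T N` the least positive integer `t` such that `A^t ≡ I (mod N)` entrywise,
we have `T (N' k) = k` for every `k ≥ 1`. -/
theorem stmt8 (a b c d : ℤ) (hdet : a * d - b * c = 1)
    (heven : Even (a + d)) (htr : 2 < a + d) (hbc : Int.gcd b c = 1)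
    (N' : ℕ → ℕ)
    (hN' : ∀ k : ℕ, 1 ≤ k →
      IsGreatest {N : ℕ | 0 < N ∧ ∀ i j : Fin 2,
        (N : ℤ) ∣ (((!![a, b; c, d] : Matrix (Fin 2) (Fin 2) ℤ) ^ k - 1) i j)} (N' k))
    (T : ℕ → ℕ)
    (hT : ∀ N : ℕ, 0 < N →
      IsLeast {t : ℕ | 0 < t ∧ ∀ i j : Fin 2,
        (N : ℤ) ∣ (((!![a, b; c, d] : Matrix (Fin 2) (Fin 2) ℤ) ^ t - 1) i j)} (T N)) :
    ∀ k : ℕ, 1 ≤ k → T (N' k) = k := fun k hk ↦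
  (hT (N' k) (hN' k hk).1.1).unique <| stmt8_general (by simpa [Matrix.det_fin_two] using hdet)
    (by simpa [Matrix.trace_fin_two] using heven)
    (by simpa [Matrix.trace_fin_two] using htr.trans_le (le_abs_self _)) hk (hN' k hk)
end

section
/- For every integer k ≥ 0, p_k + p_{k+1} ≥ λ^k. -/
/-!
Let `x ≥ y` be the roots of the characteristic polynomial `X² - T X + D` of the recurrence.
The sequence `u (t + 1) - y * u t` is geometric with ratio `x`, so `u 0 = 0` and `u 1 = 1` give
`u (t + 1) = y * u t + x ^ t`. If `x` and `y` are nonnegative, then so is `u`, and therefore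
`x ^ t ≤ u (t + 1) ≤ u t + u (t + 1)`.
-/

section Recurrence

variable {R : Type*} [CommRing R] {x y : R} {u : ℕ → R}

theorem succ_eq_mul_add_pow_of_recurrence
    (hrec : ∀ t, u (t + 2) = (x + y) * u (t + 1) - x * y * u t) (t : ℕ) :
    u (t + 1) = y * u t + x ^ t * (u 1 - y * u 0) := by
  induction t with
  | zero => ring
  | succ t ih => linear_combination hrec t + x * ih

variable [PartialOrder R] [IsOrderedRing R]

theorem nonneg_of_recurrence (hx : 0 ≤ x) (hy : 0 ≤ y) (h0 : 0 ≤ u 0) (h1 : y * u 0 ≤ u 1)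
    (hrec : ∀ t, u (t + 2) = (x + y) * u (t + 1) - x * y * u t) (t : ℕ) : 0 ≤ u t := by
  induction t with
  | zero => exact h0
  | succ t ih =>
    rw [succ_eq_mul_add_pow_of_recurrence hrec]
    exact add_nonneg (mul_nonneg hy ih) (mul_nonneg (pow_nonneg hx t) (sub_nonneg.mpr h1))

theorem pow_mul_le_add_succ_of_recurrence (hx : 0 ≤ x) (hy : 0 ≤ y) (h0 : 0 ≤ u 0)
    (h1 : y * u 0 ≤ u 1) (hrec : ∀ t, u (t + 2) = (x + y) * u (t + 1) - x * y * u t) (t : ℕ) :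
    x ^ t * (u 1 - y * u 0) ≤ u t + u (t + 1) := by
  have hu : 0 ≤ u t := nonneg_of_recurrence hx hy h0 h1 hrec t
  calc x ^ t * (u 1 - y * u 0) ≤ y * u t + x ^ t * (u 1 - y * u 0) :=
        le_add_of_nonneg_left (mul_nonneg hy hu)
    _ = u (t + 1) := (succ_eq_mul_add_pow_of_recurrence hrec t).symm
    _ ≤ u t + u (t + 1) := le_add_of_nonneg_left hu

end Recurrence

section QuadraticRoots

variable {T D : ℝ}

theorem quadratic_roots_mul (hdisc : 4 * D ≤ T ^ 2) :
    (T + √(T ^ 2 - 4 * D)) / 2 * ((T - √(T ^ 2 - 4 * D)) / 2) = D := by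
  linear_combination -(1 / 4) * Real.sq_sqrt (sub_nonneg.mpr hdisc)

theorem quadratic_smaller_root_nonneg (hT : 0 ≤ T) (hD : 0 ≤ D) :
    0 ≤ (T - √(T ^ 2 - 4 * D)) / 2 := by
  have hsqrt : √(T ^ 2 - 4 * D) ≤ T := Real.sqrt_le_iff.mpr ⟨hT, by linarith⟩
  linarith

end QuadraticRoots

theorem stmt10_general {T D : ℝ} (hT : 0 ≤ T) (hD : 0 ≤ D) (hdisc : 4 * D ≤ T ^ 2)
    {p : ℕ → ℝ} (hp0 : p 0 = 0) (hp1 : p 1 = 1)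
    (hrec : ∀ t, p (t + 2) = T * p (t + 1) - D * p t) (k : ℕ) :
    ((T + √(T ^ 2 - 4 * D)) / 2) ^ k ≤ p k + p (k + 1) := by
  set x := (T + √(T ^ 2 - 4 * D)) / 2
  set y := (T - √(T ^ 2 - 4 * D)) / 2
  have hx : 0 ≤ x := by positivity
  have hy : 0 ≤ y := quadratic_smaller_root_nonneg hT hD
  have hsum : x + y = T := by ring
  have hprod : x * y = D := quadratic_roots_mul hdisc
  have hrec_roots : ∀ t, p (t + 2) = (x + y) * p (t + 1) - x * y * p t := by
    simpa only [hsum, hprod] using hrec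
  simpa [hp0, hp1] using
    pow_mul_le_add_succ_of_recurrence hx hy hp0.ge (by simp [hp0, hp1]) hrec_roots k

/-- With `A = !![a, b; c, d]` of determinant 1 and trace `a + d > 2`,
`p` the recurrence sequence, and `λ = ((a+d) + √((a+d)² - 4)) / 2 > 1` the largest
eigenvalue of `A`, we have `p k + p (k+1) ≥ λ^k` for every `k ≥ 0`. -/
theorem stmt10 (a b c d : ℤ) (hdet : a * d - b * c = 1) (htr : 2 < a + d)
    (p : ℕ → ℤ) (hp0 : p 0 = 0) (hp1 : p 1 = 1)
    (hrec : ∀ t : ℕ, 1 ≤ t → p (t + 1) = (a + d) * p t - p (t - 1))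
    (lam : ℝ)
    (hlam : lam = (((a : ℝ) + d) + Real.sqrt (((a : ℝ) + d) ^ 2 - 4)) / 2) :
    ∀ k : ℕ, lam ^ k ≤ ((p k + p (k + 1) : ℤ) : ℝ) := by
  have hT : (2 : ℝ) < a + d := mod_cast htr
  have hrec_real : ∀ t, (p (t + 2) : ℝ) = (a + d) * p (t + 1) - 1 * p t := fun t => by
    simpa using congrArg (Int.cast (R := ℝ)) (hrec (t + 1) t.succ_pos)
  intro k
  simpa [hlam] using stmt10_general (p := fun t => (p t : ℝ)) (by linarith) zero_le_one
    (by nlinarith) (by simp [hp0]) (by simp [hp1]) hrec_real k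
end

section
/- There exists a strictly increasing sequence (N_k)_{k≥1} of odd positive integers tending to infinity such that for every k, T_{N_k} ≤ 2·(log N_k)/(log λ) + 1, where T_N denotes the least positive integer t with A^t ≡ I (mod N) entrywise. -/
/-!
If `x + x⁻¹ = t`, then `x⁻ᵏ + ⋯ + xᵏ` is an integer polynomial `Wₖ(t)`, so that
`1 + x + ⋯ + x²ᵏ = Wₖ(t) xᵏ`. This identity is applied twice, with `t` the trace of `A`. For
`x = A` it gives `A²ᵏ⁺¹ - 1 = Wₖ(t) Aᵏ (A - 1)`, so the period of `A` modulo `Wₖ(t)` is at most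
`2k + 1`. For `x = λ` it gives `λᵏ ≤ Wₖ(t)`, that is `k ≤ log Wₖ(t) / log λ`. Finally `Wₖ(t)` is
odd whenever `3 ∣ k`.
-/

/-- The polynomial `Wₖ` with `Wₖ(x + x⁻¹) = x⁻ᵏ + ⋯ + xᵏ`, evaluated at `t`; this is the Chebyshev
polynomial of the fourth kind at `t / 2`, defined by recurrence to avoid dividing by `2`. -/
def balancedGeomSum {R : Type*} [CommRing R] (t : R) : ℕ → R
  | 0 => 1
  | 1 => t + 1
  | k + 2 => t * balancedGeomSum t (k + 1) - balancedGeomSum t k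

section Algebra

variable {R S : Type*} [CommRing R] [Ring S] [Algebra R S] {t : R} {x : S}

theorem geom_sum_eq_balancedGeomSum_smul_pow (hx : x ^ 2 = t • x - 1) (k : ℕ) :
    ∑ j ∈ Finset.range (2 * k + 1), x ^ j = balancedGeomSum t k • x ^ k := by
  induction k using Nat.twoStepInduction with
  | zero => simp [balancedGeomSum]
  | one =>
    simp only [balancedGeomSum, Nat.mul_one, Finset.sum_range_succ, Finset.sum_range_zero, pow_zero,
      pow_one, hx, add_smul, one_smul]
    abel
  | more k ih ih_succ =>
    have htx : t • x = x ^ 2 + 1 := by rw [hx, sub_add_cancel]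
    calc ∑ j ∈ Finset.range (2 * (k + 2) + 1), x ^ j
        = (x ^ 2 + 1) * ∑ j ∈ Finset.range (2 * (k + 1) + 1), x ^ j
            - x ^ 2 * ∑ j ∈ Finset.range (2 * k + 1), x ^ j := by
          simp only [Nat.mul_one, add_right_comm _ _ 1,
            Finset.sum_range_succ, mul_add, add_mul, ← pow_add, one_mul]
          simp only [add_comm 2]
          abel
      _ = balancedGeomSum t (k + 2) • x ^ (k + 2) := by
          rw [ih, ih_succ, ← htx, balancedGeomSum, sub_smul, mul_smul_comm, smul_mul_assoc,
            mul_smul_comm, ← pow_succ', ← pow_add, add_comm 2 k, smul_smul, mul_comm t]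

theorem pow_sub_one_eq_balancedGeomSum_smul (hx : x ^ 2 = t • x - 1) (k : ℕ) :
    x ^ (2 * k + 1) - 1 = balancedGeomSum t k • (x ^ k * (x - 1)) := by
  rw [← geom_sum_mul, geom_sum_eq_balancedGeomSum_smul_pow hx, smul_mul_assoc]

end Algebra

section Order

variable {R : Type*} [CommRing R] [LinearOrder R] [IsStrictOrderedRing R] {t : R}

theorem balancedGeomSum_pos_and_lt_succ (ht : 2 ≤ t) (k : ℕ) :
    0 < balancedGeomSum t k ∧ balancedGeomSum t k < balancedGeomSum t (k + 1) := by
  induction k with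
  | zero => simp only [balancedGeomSum]; constructor <;> linarith
  | succ k ih =>
    obtain ⟨pos, lt_succ⟩ := ih
    have pos_succ := pos.trans lt_succ
    refine ⟨pos_succ, ?_⟩
    rw [balancedGeomSum]
    linarith [mul_le_mul_of_nonneg_right ht pos_succ.le]

theorem balancedGeomSum_pos (ht : 2 ≤ t) (k : ℕ) : 0 < balancedGeomSum t k :=
  (balancedGeomSum_pos_and_lt_succ ht k).1

theorem balancedGeomSum_strictMono (ht : 2 ≤ t) : StrictMono (balancedGeomSum t) :=
  strictMono_nat_of_lt_succ fun k => (balancedGeomSum_pos_and_lt_succ ht k).2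

end Order

theorem pow_le_balancedGeomSum {R S : Type*} [CommRing R] [CommRing S] [LinearOrder S]
    [IsStrictOrderedRing S] [Algebra R S] {t : R} {x : S} (hx : x ^ 2 = t • x - 1) (hpos : 0 < x)
    (k : ℕ) : x ^ k ≤ algebraMap R S (balancedGeomSum t k) := by
  refine le_of_mul_le_mul_right ?_ (pow_pos hpos k)
  calc x ^ k * x ^ k = x ^ (2 * k) := by rw [← pow_add, two_mul]
    _ ≤ ∑ j ∈ Finset.range (2 * k + 1), x ^ j :=
        Finset.single_le_sum (f := fun j => x ^ j) (fun j _ => (pow_pos hpos j).le)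
          (Finset.self_mem_range_succ _)
    _ = algebraMap R S (balancedGeomSum t k) * x ^ k := by
        rw [geom_sum_eq_balancedGeomSum_smul_pow hx, Algebra.smul_def]

theorem odd_balancedGeomSum_three_mul (t : ℤ) (k : ℕ) : Odd (balancedGeomSum t (3 * k)) := by
  suffices h : Odd (balancedGeomSum t (3 * k)) ∧
      (Odd (balancedGeomSum t (3 * k + 1)) ↔ Even t) from h.1
  induction k with
  | zero => simp [balancedGeomSum]
  | succ k ih =>
    simp only [Nat.mul_add, balancedGeomSum, ← Int.not_even_iff_odd, Int.even_sub,
      Int.even_mul] at ih ⊢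
    tauto

section LargestRoot

variable {t : ℝ}

theorem largest_root_sq (ht : 2 ≤ t) :
    ((t + √(t ^ 2 - 4)) / 2) ^ 2 = t * ((t + √(t ^ 2 - 4)) / 2) - 1 := by
  have hsqrt : √(t ^ 2 - 4) ^ 2 = t ^ 2 - 4 := Real.sq_sqrt (by nlinarith)
  linear_combination hsqrt / 4

theorem one_lt_largest_root (ht : 2 < t) : 1 < (t + √(t ^ 2 - 4)) / 2 := by
  linarith [Real.sqrt_nonneg (t ^ 2 - 4)]

end LargestRoot

theorem natCast_le_log_div_log {x y : ℝ} {k : ℕ} (hx : 1 < x) (h : x ^ k ≤ y) :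
    (k : ℝ) ≤ Real.log y / Real.log x := by
  rw [le_div_iff₀ (Real.log_pos hx), ← Real.log_pow]
  exact Real.log_le_log (by positivity) h

theorem sq_eq_trace_smul_sub_det_smul_one {R : Type*} [CommRing R] (A : Matrix (Fin 2) (Fin 2) R) :
    A ^ 2 = A.trace • A - A.det • 1 := by
  nontriviality R
  have cayley_hamilton := A.aeval_self_charpoly
  simp only [Matrix.charpoly_fin_two, map_add, map_sub, map_mul, map_pow, Polynomial.aeval_X,
    Polynomial.aeval_C, Algebra.algebraMap_eq_smul_one, smul_mul_assoc, one_mul]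
    at cayley_hamilton
  rw [← sub_eq_zero, ← sub_add, cayley_hamilton]

theorem stmt11_general {n : Type*} [Fintype n] [DecidableEq n] (A : Matrix n n ℤ) (t : ℤ)
    (ht : 2 < t) (hA : A ^ 2 = t • A - 1) (lam : ℝ)
    (hlam : lam = ((t : ℝ) + √((t : ℝ) ^ 2 - 4)) / 2) (T : ℕ → ℕ)
    (hT : ∀ N : ℕ, 0 < N →
      IsLeast {m : ℕ | 0 < m ∧ ∀ i j, (N : ℤ) ∣ (A ^ m - 1) i j} (T N)) :
    ∃ Nseq : ℕ → ℕ, StrictMono Nseq ∧ (∀ k, Odd (Nseq k)) ∧ (∀ k, 0 < Nseq k)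
      ∧ Filter.Tendsto Nseq Filter.atTop Filter.atTop
      ∧ ∀ k, (T (Nseq k) : ℝ) ≤ 2 * Real.log (Nseq k) / Real.log lam + 1 := by
  have ht_real : (2 : ℝ) < t := mod_cast ht
  have one_lt_lam : 1 < lam := hlam ▸ one_lt_largest_root ht_real
  have lam_sq : lam ^ 2 = t • lam - 1 := by
    rw [zsmul_eq_mul, hlam, largest_root_sq ht_real.le]
  choose N hN using fun k => Int.eq_ofNat_of_zero_le (balancedGeomSum_pos ht.le (3 * k)).le
  have N_pos (k : ℕ) : 0 < N k := by
    exact_mod_cast hN k ▸ balancedGeomSum_pos ht.le (3 * k)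
  have N_strictMono : StrictMono N := fun i j hij => by
    have := balancedGeomSum_strictMono ht.le (Nat.mul_lt_mul_of_pos_left hij three_pos)
    rwa [hN, hN, Int.ofNat_lt] at this
  refine ⟨N, N_strictMono, fun k => ?_, N_pos, N_strictMono.tendsto_atTop, fun k => ?_⟩
  · exact_mod_cast hN k ▸ odd_balancedGeomSum_three_mul t k
  · have period_le : T (N k) ≤ 2 * (3 * k) + 1 := by
      refine (hT _ (N_pos k)).2 ⟨Nat.succ_pos _, fun i j => ?_⟩
      rw [pow_sub_one_eq_balancedGeomSum_smul hA, hN]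
      exact dvd_mul_right _ _
    have lam_pow_le : lam ^ (3 * k) ≤ N k := by
      simpa [hN] using pow_le_balancedGeomSum lam_sq (by positivity) (3 * k)
    calc (T (N k) : ℝ) ≤ 2 * (3 * k : ℕ) + 1 := mod_cast period_le
      _ ≤ 2 * (Real.log (N k) / Real.log lam) + 1 := by
          gcongr
          exact natCast_le_log_div_log one_lt_lam lam_pow_le
      _ = 2 * Real.log (N k) / Real.log lam + 1 := by rw [mul_div_assoc]

/-- With `A = !![a, b; c, d]` of determinant 1, trace `a + d` even and
`> 2`, `gcd(b, c) = 1`, `λ > 1` the largest eigenvalue of `A`, and `T N` the least positive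
integer `t` with `A^t ≡ I (mod N)` entrywise, there exists a strictly increasing sequence of
odd positive integers `N k` tending to infinity with
`T (N k) ≤ 2 log (N k) / log λ + 1` for every `k`. -/
theorem stmt11 (a b c d : ℤ) (hdet : a * d - b * c = 1)
    (heven : Even (a + d)) (htr : 2 < a + d) (hbc : Int.gcd b c = 1)
    (lam : ℝ)
    (hlam : lam = (((a : ℝ) + d) + Real.sqrt (((a : ℝ) + d) ^ 2 - 4)) / 2)
    (T : ℕ → ℕ)
    (hT : ∀ N : ℕ, 0 < N →
      IsLeast {t : ℕ | 0 < t ∧ ∀ i j : Fin 2,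
        (N : ℤ) ∣ (((!![a, b; c, d] : Matrix (Fin 2) (Fin 2) ℤ) ^ t - 1) i j)} (T N)) :
    ∃ Nseq : ℕ → ℕ, StrictMono Nseq ∧ (∀ k, Odd (Nseq k)) ∧ (∀ k, 0 < Nseq k)
      ∧ Filter.Tendsto Nseq Filter.atTop Filter.atTop
      ∧ ∀ k, (T (Nseq k) : ℝ) ≤ 2 * Real.log (Nseq k) / Real.log lam + 1 := by
  have hA := sq_eq_trace_smul_sub_det_smul_one !![a, b; c, d]
  exact stmt11_general _ (a + d) htr (by simpa [hdet] using hA) lam (by simpa using hlam) T hT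
end

section
/- Let N and t be positive integers and let V be a complex linear subspace of ℂ^N with dim V ≥ N/t. Then there exists u ∈ V with ‖u‖_{ℓ²} = 1 and ‖u‖_{ℓ^∞} ≥ 1/√t. -/
/-!
Let `P` be the orthogonal projection onto `V` and `e₁, …, e_N` the standard basis. Then
`∑ⱼ ‖P eⱼ‖² = ∑ⱼ ⟪eⱼ, P eⱼ⟫ = tr P = dim V ≥ N / t`, so `‖P eⱼ‖² ≥ 1 / t` for some `j`. The vector
`u = P eⱼ / ‖P eⱼ‖` then works, because its `j`-th coordinate is
`⟪eⱼ, P eⱼ⟫ / ‖P eⱼ‖ = ‖P eⱼ‖`.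
-/

open Module
open scoped InnerProductSpace

section InnerProductSpace

variable {𝕜 E ι : Type*} [RCLike 𝕜] [NormedAddCommGroup E] [InnerProductSpace 𝕜 E] [Fintype ι]

theorem inner_starProjection_self_eq_norm_sq (K : Submodule 𝕜 E) [K.HasOrthogonalProjection]
    (v : E) : ⟪v, K.starProjection v⟫_𝕜 = (‖K.starProjection v‖ : 𝕜) ^ 2 := by
  rw [← inner_self_eq_norm_sq_to_K, K.inner_starProjection_left_eq_right,
    K.starProjection_eq_self_iff.2 (K.starProjection_apply_mem v)]

theorem exists_mem_norm_eq_one_norm_inner_eq_norm_starProjection (K : Submodule 𝕜 E)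
    [K.HasOrthogonalProjection] {v : E} (hv : K.starProjection v ≠ 0) :
    ∃ u ∈ K, ‖u‖ = 1 ∧ ‖⟪v, u⟫_𝕜‖ = ‖K.starProjection v‖ := by
  refine ⟨(‖K.starProjection v‖⁻¹ : 𝕜) • K.starProjection v,
    K.smul_mem _ (K.starProjection_apply_mem v), norm_smul_inv_norm hv, ?_⟩
  have hnorm : ‖K.starProjection v‖ ≠ 0 := norm_ne_zero_iff.2 hv
  rw [inner_smul_right, inner_starProjection_self_eq_norm_sq, norm_mul, norm_inv, norm_pow,
    RCLike.norm_ofReal, abs_norm]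
  field_simp

theorem trace_starProjection [FiniteDimensional 𝕜 E] (K : Submodule 𝕜 E) :
    LinearMap.trace 𝕜 E K.starProjection = (finrank 𝕜 K : 𝕜) :=
  LinearMap.IsProj.trace
    ⟨K.starProjection_apply_mem, fun _ hx => K.starProjection_eq_self_iff.2 hx⟩

theorem sum_norm_sq_starProjection_orthonormalBasis [FiniteDimensional 𝕜 E]
    (b : OrthonormalBasis ι 𝕜 E) (K : Submodule 𝕜 E) :
    ∑ i, ‖K.starProjection (b i)‖ ^ 2 = (finrank 𝕜 K : ℝ) := by
  have htrace : ∑ i, (‖K.starProjection (b i)‖ : 𝕜) ^ 2 = (finrank 𝕜 K : 𝕜) :=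
    calc
      _ = ∑ i, ⟪b i, K.starProjection (b i)⟫_𝕜 := by
        simp only [inner_starProjection_self_eq_norm_sq]
      _ = LinearMap.trace 𝕜 E K.starProjection := (LinearMap.trace_eq_sum_inner _ b).symm
      _ = (finrank 𝕜 K : 𝕜) := trace_starProjection K
  exact_mod_cast htrace

theorem exists_finrank_div_card_le_norm_sq_starProjection [FiniteDimensional 𝕜 E] [Nonempty ι]
    (b : OrthonormalBasis ι 𝕜 E) (K : Submodule 𝕜 E) :
    ∃ i, (finrank 𝕜 K : ℝ) / Fintype.card ι ≤ ‖K.starProjection (b i)‖ ^ 2 := by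
  have hsum : ∑ _i : ι, (finrank 𝕜 K : ℝ) / Fintype.card ι
      ≤ ∑ i, ‖K.starProjection (b i)‖ ^ 2 := by
    rw [sum_norm_sq_starProjection_orthonormalBasis, Finset.sum_const,
      Finset.card_univ, nsmul_eq_mul, mul_div_cancel₀ _ (Nat.cast_ne_zero.2 Fintype.card_ne_zero)]
  obtain ⟨i, -, hi⟩ := Finset.exists_le_of_sum_le Finset.univ_nonempty hsum
  exact ⟨i, hi⟩

theorem exists_mem_norm_eq_one_sqrt_finrank_div_card_le_norm_inner
    (b : OrthonormalBasis ι 𝕜 E) {K : Submodule 𝕜 E} (hK : K ≠ ⊥) :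
    ∃ u ∈ K, ‖u‖ = 1 ∧ ∃ i, √((finrank 𝕜 K : ℝ) / Fintype.card ι) ≤ ‖⟪b i, u⟫_𝕜‖ := by
  have : FiniteDimensional 𝕜 E := b.toBasis.finiteDimensional_of_finite
  have hrank : 0 < finrank 𝕜 K := Submodule.one_le_finrank_iff.2 hK
  have hcard : 0 < Fintype.card ι :=
    finrank_eq_card_basis b.toBasis ▸ hrank.trans_le K.finrank_le
  have : Nonempty ι := Fintype.card_pos_iff.1 hcard
  obtain ⟨i, hi⟩ := exists_finrank_div_card_le_norm_sq_starProjection b K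
  have hproj : K.starProjection (b i) ≠ 0 := by
    rw [← norm_ne_zero_iff, ← sq_pos_iff]
    exact lt_of_lt_of_le (by positivity) hi
  obtain ⟨u, huK, hu, hinner⟩ :=
    exists_mem_norm_eq_one_norm_inner_eq_norm_starProjection K hproj
  exact ⟨u, huK, hu, i, hinner ▸ Real.sqrt_le_iff.2 ⟨norm_nonneg _, hi⟩⟩

end InnerProductSpace

theorem exists_mem_l2_norm_eq_one_sqrt_finrank_div_card_le_norm {𝕜 ι : Type*} [RCLike 𝕜]
    [Fintype ι] {V : Submodule 𝕜 (ι → 𝕜)} (hV : V ≠ ⊥) :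
    ∃ u ∈ V, √(∑ j, ‖u j‖ ^ 2) = 1 ∧ √((finrank 𝕜 V : ℝ) / Fintype.card ι) ≤ ‖u‖ := by
  let e : (ι → 𝕜) ≃ₗ[𝕜] EuclideanSpace 𝕜 ι := (WithLp.linearEquiv 2 𝕜 (ι → 𝕜)).symm
  have hmap : V.map (e : (ι → 𝕜) →ₗ[𝕜] EuclideanSpace 𝕜 ι) ≠ ⊥ :=
    Submodule.map_eq_bot_iff.not.2 hV
  obtain ⟨_, ⟨u, huV, rfl⟩, hu, j, hj⟩ :=
    exists_mem_norm_eq_one_sqrt_finrank_div_card_le_norm_inner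
      (EuclideanSpace.basisFun ι 𝕜) hmap
  rw [LinearEquiv.finrank_map_eq, EuclideanSpace.basisFun_inner] at hj
  rw [EuclideanSpace.norm_eq] at hu
  exact ⟨u, huV, hu, hj.trans (norm_le_pi_norm u j)⟩

theorem stmt12_general {𝕜 ι : Type*} [RCLike 𝕜] [Fintype ι] [Nonempty ι] {t : ℝ} (ht : 0 < t)
    (V : Submodule 𝕜 (ι → 𝕜)) (hdim : Fintype.card ι / t ≤ finrank 𝕜 V) :
    ∃ u ∈ V, √(∑ j, ‖u j‖ ^ 2) = 1 ∧ 1 / √t ≤ ‖u‖ := by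
  have hcard : (0 : ℝ) < Fintype.card ι := Nat.cast_pos.2 Fintype.card_pos
  have hV : V ≠ ⊥ := by
    rintro rfl
    rw [finrank_bot, Nat.cast_zero] at hdim
    exact (div_pos hcard ht).not_ge hdim
  obtain ⟨u, huV, hu, hle⟩ := exists_mem_l2_norm_eq_one_sqrt_finrank_div_card_le_norm hV
  refine ⟨u, huV, hu, le_trans ?_ hle⟩
  rw [← Real.sqrt_one, ← Real.sqrt_div zero_le_one]
  apply Real.sqrt_le_sqrt
  rwa [le_div_iff₀ hcard, one_div_mul_eq_div]

/-- Let `N, t` be positive integers and `V` a complex linear subspace of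
`ℂ^N` with `dim V ≥ N / t`. Then there exists `u ∈ V` with `‖u‖_{ℓ²} = 1` and
`‖u‖_{ℓ∞} ≥ 1 / √t`. (Here `Fin N → ℂ` carries the sup norm, i.e. `‖u‖ = ‖u‖_{ℓ∞}`.) -/
theorem stmt12 (N t : ℕ) (hN : 0 < N) (ht : 0 < t)
    (V : Submodule ℂ (Fin N → ℂ))
    (hdim : (N : ℝ) / (t : ℝ) ≤ (Module.finrank ℂ V : ℝ)) :
    ∃ u : Fin N → ℂ, u ∈ V ∧ Real.sqrt (∑ j, ‖u j‖ ^ 2) = 1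
      ∧ 1 / Real.sqrt t ≤ ‖u‖ := by
  have : Nonempty (Fin N) := ⟨⟨0, hN⟩⟩
  exact stmt12_general (Nat.cast_pos.2 ht) V (by rwa [Fintype.card_fin])
end

section
/- For every l ∈ ℤ, c_{l+N} = c_l, where c_l := Σ_{r=0}^{|b|−1} exp( (2πi/b) · ( d·l²/(2N) − l·r − l·j/N + a·N·r²/2 + a·r·j + a·j/(2N) ) ). -/
/-!
Write `c_l = ∑ r, e(Φ(l, r) / b)`, where `e(x) = exp (2πix)`. Since `abN` is even, `r ↦ r + b`
changes the phase `Φ` by a multiple of `b`, so the sum runs over residues `r` modulo `b`.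
Since `ad - 1 = bc` and `cdN` is even, the simultaneous shift `(l, r) ↦ (l + N, r + d)` also
changes `Φ` by a multiple of `b`. Reindexing the sum by `r ↦ r + d` therefore turns
`c_{l+N}` into `c_l`.
-/

open Finset Function

section PeriodicSum

variable {M : Type*} [AddCommMonoid M] {f : ℤ → M}

theorem sum_range_add_one_of_periodic {n : ℕ} (hf : Periodic f n) :
    ∑ r ∈ range n, f (r + 1) = ∑ r ∈ range n, f r := by
  cases n with
  | zero => rfl
  | succ m =>
    have hwrap : f (m + 1) = f 0 := by simpa using hf 0
    rw [sum_range_succ, sum_range_succ', hwrap]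
    simp only [Nat.cast_add, Nat.cast_one, Nat.cast_zero]

theorem sum_range_add_of_periodic {n : ℕ} (hf : Periodic f n) (k : ℤ) :
    ∑ r ∈ range n, f (r + k) = ∑ r ∈ range n, f r := by
  have hone : Periodic (fun k : ℤ ↦ ∑ r ∈ range n, f (r + k)) 1 := fun k ↦ by
    simpa only [add_assoc, add_comm (1 : ℤ)] using
      sum_range_add_one_of_periodic (hf.add_const k)
  simpa using hone.int_mul_eq k

theorem sum_range_natAbs_add_of_periodic {b : ℤ} (hf : Periodic f b) (k : ℤ) :
    ∑ r ∈ range b.natAbs, f (r + k) = ∑ r ∈ range b.natAbs, f r := by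
  refine sum_range_add_of_periodic ?_ k
  rcases b.natAbs_eq with hb | hb
  · rwa [← hb]
  · rw [← neg_eq_iff_eq_neg.mpr hb]
    exact hf.neg

end PeriodicSum

theorem exp_two_pi_I_div_mul_add_mul_int {b : ℂ} (hb : b ≠ 0) (x : ℂ) (m : ℤ) :
    Complex.exp (2 * Real.pi * Complex.I / b * (x + b * m)) =
      Complex.exp (2 * Real.pi * Complex.I / b * x) :=
  Complex.exp_eq_exp_iff_exists_int.mpr ⟨m, by field_simp⟩

/-- The quadratic phase `Φ(l, r)` of the Gauss sum `gaussCoeff`, before division by `b`. -/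
noncomputable def gaussPhase (a d N j l r : ℤ) : ℂ :=
  d * l ^ 2 / (2 * N) - l * r - l * j / N + a * N * r ^ 2 / 2 + a * r * j + a * j / (2 * N)

/-- The summand `exp (2πi Φ(l, r) / b)` of the Gauss sum `gaussCoeff`. The index `r` ranges over
all integers, so that periodicity in `r` can be expressed. -/
noncomputable def gaussTerm (a b d N j l r : ℤ) : ℂ :=
  Complex.exp (2 * Real.pi * Complex.I / b * gaussPhase a d N j l r)

/-- The quadratic Gauss sum `c_l`, with `N` allowed to be any integer. -/
noncomputable def gaussCoeff (a b d N j l : ℤ) : ℂ :=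
  ∑ r ∈ range b.natAbs, gaussTerm a b d N j l r

section GaussSum

variable {a b c d N : ℤ}

theorem exists_gaussPhase_add_right (habN : Even (a * b * N)) (j l r : ℤ) :
    ∃ m : ℤ, gaussPhase a d N j l (r + b) = gaussPhase a d N j l r + b * m := by
  obtain ⟨u, hu⟩ := habN
  have hu' : (a * b * N : ℂ) = u + u := mod_cast hu
  refine ⟨-l + a * N * r + a * j + u, ?_⟩
  simp only [gaussPhase]
  push_cast
  linear_combination (b / 2 : ℂ) * hu'

theorem exists_gaussPhase_add_add (hN : N ≠ 0) (hdet : a * d - b * c = 1)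
    (hcdN : Even (c * d * N)) (j l r : ℤ) :
    ∃ m : ℤ, gaussPhase a d N j (l + N) (r + d) = gaussPhase a d N j l r + b * m := by
  obtain ⟨v, hv⟩ := hcdN
  have hN' : (N : ℂ) ≠ 0 := mod_cast hN
  have hdet' : (a * d - b * c : ℂ) = 1 := mod_cast hdet
  have hv' : (c * d * N : ℂ) = v + v := mod_cast hv
  refine ⟨c * N * r + c * j + v, ?_⟩
  simp only [gaussPhase]
  push_cast
  field_simp
  linear_combination (N * (2 * N * r + 2 * j + N * d) : ℂ) * hdet' + (b * N : ℂ) * hv'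

theorem gaussTerm_periodic (hb : b ≠ 0) (habN : Even (a * b * N)) (j l : ℤ) :
    Periodic (gaussTerm a b d N j l) b := fun r ↦ by
  obtain ⟨m, hm⟩ := exists_gaussPhase_add_right (d := d) habN j l r
  rw [gaussTerm, hm, exp_two_pi_I_div_mul_add_mul_int (mod_cast hb), gaussTerm]

theorem gaussTerm_add_add (hb : b ≠ 0) (hN : N ≠ 0) (hdet : a * d - b * c = 1)
    (hcdN : Even (c * d * N)) (j l r : ℤ) :
    gaussTerm a b d N j (l + N) (r + d) = gaussTerm a b d N j l r := by
  obtain ⟨m, hm⟩ := exists_gaussPhase_add_add hN hdet hcdN j l r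
  rw [gaussTerm, hm, exp_two_pi_I_div_mul_add_mul_int (mod_cast hb), gaussTerm]

theorem stmt13_general (hb : b ≠ 0) (hN : N ≠ 0) (hdet : a * d - b * c = 1)
    (habN : Even (a * b * N)) (hcdN : Even (c * d * N)) (j : ℤ) :
    Periodic (gaussCoeff a b d N j) N := fun l ↦
  calc
    gaussCoeff a b d N j (l + N)
      = ∑ r ∈ range b.natAbs, gaussTerm a b d N j (l + N) (r + d) :=
        (sum_range_natAbs_add_of_periodic (gaussTerm_periodic hb habN j (l + N)) d).symm
    _ = gaussCoeff a b d N j l :=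
        sum_congr rfl fun r _ ↦ gaussTerm_add_add hb hN hdet hcdN j l r

end GaussSum

open Complex in
/-- Let `a, b, c, d` be integers with `ad - bc = 1`, `b ≠ 0`, `ab` even,
`cd` even, let `N` be an odd positive integer and `j` an integer. Define, for `l ∈ ℤ`,
`c_l = Σ_{r=0}^{|b|-1} exp((2πi/b) (d l²/(2N) - l r - l j/N + a N r²/2 + a r j + a j/(2N)))`.
Then `c_{l+N} = c_l` for every `l ∈ ℤ`. -/
theorem stmt13 (a b c d : ℤ) (hb : b ≠ 0) (hdet : a * d - b * c = 1)
    (hab : Even (a * b)) (hcd : Even (c * d))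
    (N : ℕ) (hNpos : 0 < N) (hNodd : Odd N) (j : ℤ)
    (cseq : ℤ → ℂ)
    (hcseq : ∀ l : ℤ, cseq l = ∑ r ∈ Finset.range b.natAbs,
      Complex.exp ((2 * (Real.pi : ℂ) * Complex.I / (b : ℂ)) *
        ((d : ℂ) * (l : ℂ) ^ 2 / (2 * (N : ℂ)) - (l : ℂ) * (r : ℂ)
          - (l : ℂ) * (j : ℂ) / (N : ℂ)
          + (a : ℂ) * (N : ℂ) * (r : ℂ) ^ 2 / 2
          + (a : ℂ) * (r : ℂ) * (j : ℂ)
          + (a : ℂ) * (j : ℂ) / (2 * (N : ℂ))))) :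
    ∀ l : ℤ, cseq (l + N) = cseq l := by
  obtain rfl : cseq = gaussCoeff a b d N j := funext fun l ↦ by
    simp only [hcseq, gaussCoeff, gaussTerm, gaussPhase, Int.cast_natCast]
  exact stmt13_general hb (mod_cast hNpos.ne') hdet (hab.mul_right _) (hcd.mul_right _) j
end

section
/- Let M be a unitary N×N complex matrix, let μ ∈ ℂ and u ∈ ℂ^N satisfy M u = μ u and ‖u‖_{ℓ²} = 1, and let T be a positive integer. Suppose there are constants C > 0 and λ > 1 such that ‖M^j‖_{ℓ¹→ℓ^∞} ≤ C·λ^{j/2}/√N for every integer j with 1 ≤ j ≤ T − 1. Then ‖u‖²_{ℓ^∞} ≤ 1/T + (2C/√N)·Σ_{j=1}^{T−1} λ^{j/2}. -/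
open scoped ENNReal

/-- The operator norm of a complex `N × N` matrix `B`, acting by matrix–vector
multiplication, viewed as a linear map from `(ℂ^N, ‖·‖_{ℓᵖ})` to `(ℂ^N, ‖·‖_{ℓ^q})`. -/
noncomputable def matOpNorm {N : ℕ} (p q : ℝ≥0∞) [Fact (1 ≤ p)] [Fact (1 ≤ q)]
    (B : Matrix (Fin N) (Fin N) ℂ) : ℝ :=
  ‖LinearMap.toContinuousLinearMap
    (((WithLp.linearEquiv q ℂ (Fin N → ℂ)).symm.toLinearMap.comp
        B.mulVecLin).comp
      (WithLp.linearEquiv p ℂ (Fin N → ℂ)).toLinearMap :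
      PiLp p (fun _ : Fin N => ℂ) →ₗ[ℂ] PiLp q (fun _ : Fin N => ℂ))‖

/-!
Fix a coordinate `k` and let `e` be the corresponding basis vector. Since `M` is unitary and
`|μ| = 1`, each of the `T` vectors `M ^ j e`, `0 ≤ j < T`, satisfies `|⟪M ^ j e, u⟫| = |u k|`.
Bombieri's generalisation of Bessel's inequality bounds `T |u k|² = ∑ j, |⟪M ^ j e, u⟫|²` by the
largest absolute row sum of the Gram matrix of these vectors. Its `(i, j)` entry has absolute value
`|⟪e, M ^ |i - j| e⟫| ≤ ‖M ^ |i - j|‖_{ℓ¹→ℓ^∞}`, and along a row each nonzero value of `|i - j|`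
occurs at most twice.
-/

open scoped InnerProductSpace

theorem sum_mul_mul_le_of_symm_of_row_sum_le {ι : Type*} {s : Finset ι} {g : ι → ι → ℝ} {B : ℝ}
    (hg : ∀ i ∈ s, ∀ j ∈ s, 0 ≤ g i j) (hsymm : ∀ i ∈ s, ∀ j ∈ s, g i j = g j i)
    (hrow : ∀ i ∈ s, ∑ j ∈ s, g i j ≤ B) (x : ι → ℝ) :
    ∑ i ∈ s, ∑ j ∈ s, x i * x j * g i j ≤ B * ∑ i ∈ s, x i ^ 2 := by
  have hswap : ∑ i ∈ s, ∑ j ∈ s, x j ^ 2 * g i j = ∑ i ∈ s, ∑ j ∈ s, x i ^ 2 * g i j := by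
    rw [Finset.sum_comm]
    exact Finset.sum_congr rfl fun i hi => Finset.sum_congr rfl fun j hj => by rw [hsymm j hj i hi]
  calc ∑ i ∈ s, ∑ j ∈ s, x i * x j * g i j
      ≤ ∑ i ∈ s, ∑ j ∈ s, (x i ^ 2 * g i j + x j ^ 2 * g i j) / 2 := by
        refine Finset.sum_le_sum fun i hi => Finset.sum_le_sum fun j hj => ?_
        nlinarith [mul_le_mul_of_nonneg_right (two_mul_le_add_sq (x i) (x j)) (hg i hi j hj)]
    _ = ∑ i ∈ s, x i ^ 2 * ∑ j ∈ s, g i j := by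
        simp only [← Finset.sum_div, Finset.sum_add_distrib, hswap, add_self_div_two,
          Finset.mul_sum]
    _ ≤ ∑ i ∈ s, x i ^ 2 * B := by gcongr with i hi; exact hrow i hi
    _ = B * ∑ i ∈ s, x i ^ 2 := by rw [← Finset.sum_mul, mul_comm]

theorem sum_range_dist_le {f : ℕ → ℝ} (hf : ∀ j, 0 ≤ f j) {T i : ℕ} (hi : i < T) :
    ∑ j ∈ Finset.range T, f (Nat.dist i j) ≤ f 0 + 2 * ∑ j ∈ Finset.Ico 1 T, f j := by
  obtain ⟨m, rfl⟩ := Nat.exists_eq_add_of_lt hi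
  have hleft : ∑ j ∈ Finset.range (i + 1), f (Nat.dist i j) =
      f 0 + ∑ j ∈ Finset.Ico 1 (i + 1), f j := by
    rw [← Finset.sum_range_reflect, ← Finset.sum_range_eq_add_Ico _ i.succ_pos]
    refine Finset.sum_congr rfl fun j hj => congrArg f ?_
    simp only [Finset.mem_range, Nat.dist] at hj ⊢
    lia
  have hright : ∑ j ∈ Finset.Ico (i + 1) (i + m + 1), f (Nat.dist i j) =
      ∑ j ∈ Finset.Ico 1 (m + 1), f j := by
    simp only [Finset.sum_Ico_eq_sum_range]
    refine Finset.sum_congr (by congr 1; lia) fun j _ => congrArg f ?_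
    simp only [Nat.dist]
    lia
  have hmono : ∀ n ≤ i + m, ∑ j ∈ Finset.Ico 1 (n + 1), f j ≤
      ∑ j ∈ Finset.Ico 1 (i + m + 1), f j := fun n hn =>
    Finset.sum_le_sum_of_subset_of_nonneg (Finset.Ico_subset_Ico_right (by lia)) fun j _ _ => hf j
  rw [← Finset.sum_range_add_sum_Ico _ (show i + 1 ≤ i + m + 1 by lia), hleft, hright]
  linarith [hmono i (by lia), hmono m (by lia)]

section InnerProductSpace

variable {𝕜 E : Type*} [RCLike 𝕜] [SeminormedAddCommGroup E] [InnerProductSpace 𝕜 E]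

theorem norm_sum_smul_sq_le_of_gram_row_sum_le {ι : Type*} {s : Finset ι} {v : ι → E} {B : ℝ}
    (hrow : ∀ i ∈ s, ∑ j ∈ s, ‖⟪v i, v j⟫_𝕜‖ ≤ B) (a : ι → 𝕜) :
    ‖∑ i ∈ s, a i • v i‖ ^ 2 ≤ B * ∑ i ∈ s, ‖a i‖ ^ 2 :=
  calc ‖∑ i ∈ s, a i • v i‖ ^ 2
      = ‖⟪∑ i ∈ s, a i • v i, ∑ j ∈ s, a j • v j⟫_𝕜‖ := by
        rw [inner_self_eq_norm_sq_to_K, norm_pow, RCLike.norm_ofReal, abs_norm]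
    _ ≤ ∑ i ∈ s, ∑ j ∈ s, ‖⟪a i • v i, a j • v j⟫_𝕜‖ := by
        simp_rw [sum_inner, inner_sum]
        exact (norm_sum_le _ _).trans (Finset.sum_le_sum fun i _ => norm_sum_le _ _)
    _ = ∑ i ∈ s, ∑ j ∈ s, ‖a i‖ * ‖a j‖ * ‖⟪v i, v j⟫_𝕜‖ := by
        simp only [inner_smul_left, inner_smul_right, norm_mul, RCLike.norm_conj,
          mul_left_comm, mul_assoc]
    _ ≤ B * ∑ i ∈ s, ‖a i‖ ^ 2 :=
        sum_mul_mul_le_of_symm_of_row_sum_le (fun _ _ _ _ => norm_nonneg _)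
          (fun _ _ _ _ => norm_inner_symm _ _) hrow _

theorem bombieri_inequality {ι : Type*} {s : Finset ι} {v : ι → E} {B : ℝ} (hB : 0 ≤ B)
    (hrow : ∀ i ∈ s, ∑ j ∈ s, ‖⟪v i, v j⟫_𝕜‖ ≤ B) (u : E) :
    ∑ i ∈ s, ‖⟪v i, u⟫_𝕜‖ ^ 2 ≤ B * ‖u‖ ^ 2 := by
  set S := ∑ i ∈ s, ‖⟪v i, u⟫_𝕜‖ ^ 2
  set w := ∑ i ∈ s, ⟪v i, u⟫_𝕜 • v i
  have hS : 0 ≤ S := by positivity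
  have hwu : ⟪w, u⟫_𝕜 = (S : 𝕜) := by
    simp only [w, S, sum_inner, inner_smul_left, RCLike.conj_mul, RCLike.ofReal_sum,
      RCLike.ofReal_pow]
  have hSq : S * S ≤ S * (B * ‖u‖ ^ 2) :=
    calc S * S = ‖⟪w, u⟫_𝕜‖ ^ 2 := by rw [hwu, RCLike.norm_of_nonneg hS, sq]
      _ ≤ (‖w‖ * ‖u‖) ^ 2 := by gcongr; exact norm_inner_le_norm w u
      _ = ‖w‖ ^ 2 * ‖u‖ ^ 2 := mul_pow _ _ _
      _ ≤ B * S * ‖u‖ ^ 2 := by gcongr; exact norm_sum_smul_sq_le_of_gram_row_sum_le hrow _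
      _ = S * (B * ‖u‖ ^ 2) := by ring
  rcases hS.eq_or_lt with hS0 | hS0
  · rw [← hS0]; positivity
  · exact le_of_mul_le_mul_left hSq hS0

theorem norm_inner_pow_apply_pow_apply (A : E →ₗᵢ[𝕜] E) (e : E) (i j : ℕ) :
    ‖⟪(A ^ i) e, (A ^ j) e⟫_𝕜‖ = ‖⟪e, (A ^ Nat.dist i j) e⟫_𝕜‖ := by
  wlog hij : i ≤ j generalizing i j
  · rw [norm_inner_symm, this j i (le_of_not_ge hij), Nat.dist_comm]
  · obtain ⟨d, rfl⟩ := Nat.exists_eq_add_of_le hij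
    rw [Nat.dist_eq_sub_of_le hij, Nat.add_sub_cancel_left, pow_add, LinearIsometry.coe_mul,
      Function.comp_apply, LinearIsometry.inner_map_map]

theorem norm_eigenvalue_eq_one (A : E →ₗᵢ[𝕜] E) {μ : 𝕜} {u : E} (hu : A u = μ • u)
    (hu0 : ‖u‖ ≠ 0) : ‖μ‖ = 1 := by
  have hnorm : ‖μ‖ * ‖u‖ = ‖u‖ := by rw [← norm_smul, ← hu, A.norm_map]
  exact (mul_eq_right₀ hu0).1 hnorm

theorem norm_inner_pow_apply_eigenvector (A : E →ₗᵢ[𝕜] E) {μ : 𝕜} {u : E} (hu : A u = μ • u)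
    (e : E) (j : ℕ) : ‖⟪(A ^ j) e, u⟫_𝕜‖ = ‖⟪e, u⟫_𝕜‖ := by
  rcases eq_or_ne ‖u‖ 0 with hu0 | hu0
  · simp [inner_eq_zero_of_right, hu0]
  induction j with
  | zero => simp
  | succ j ih =>
    calc ‖⟪(A ^ (j + 1)) e, u⟫_𝕜‖ = ‖⟪A ((A ^ j) e), A u⟫_𝕜‖ := by
          rw [hu, inner_smul_right, norm_mul, norm_eigenvalue_eq_one A hu hu0, one_mul, pow_succ',
            LinearIsometry.coe_mul, Function.comp_apply]
      _ = ‖⟪e, u⟫_𝕜‖ := by rw [A.inner_map_map, ih]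

theorem mul_norm_inner_eigenvector_sq_le (A : E →ₗᵢ[𝕜] E) {μ : 𝕜} {u : E} (hu : A u = μ • u)
    (e : E) (T : ℕ) :
    T * ‖⟪e, u⟫_𝕜‖ ^ 2 ≤
      (‖e‖ ^ 2 + 2 * ∑ j ∈ Finset.Ico 1 T, ‖⟪e, (A ^ j) e⟫_𝕜‖) * ‖u‖ ^ 2 := by
  have hrow : ∀ i ∈ Finset.range T, ∑ j ∈ Finset.range T, ‖⟪(A ^ i) e, (A ^ j) e⟫_𝕜‖ ≤
      ‖e‖ ^ 2 + 2 * ∑ j ∈ Finset.Ico 1 T, ‖⟪e, (A ^ j) e⟫_𝕜‖ := fun i hi => by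
    simp only [norm_inner_pow_apply_pow_apply]
    refine (sum_range_dist_le (f := fun j => ‖⟪e, (A ^ j) e⟫_𝕜‖) (fun _ => norm_nonneg _)
      (Finset.mem_range.1 hi)).trans_eq ?_
    simp [inner_self_eq_norm_sq_to_K]
  simpa [norm_inner_pow_apply_eigenvector A hu] using bombieri_inequality (by positivity) hrow u

end InnerProductSpace

section matOpNorm

variable {N : ℕ} (p q : ℝ≥0∞) [Fact (1 ≤ p)] [Fact (1 ≤ q)] (B : Matrix (Fin N) (Fin N) ℂ)

theorem norm_toLp_mulVec_le_matOpNorm_mul (x : PiLp p fun _ : Fin N => ℂ) :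
    ‖WithLp.toLp q (B.mulVec x.ofLp)‖ ≤ matOpNorm p q B * ‖x‖ :=
  ContinuousLinearMap.le_opNorm (LinearMap.toContinuousLinearMap
    (((WithLp.linearEquiv q ℂ (Fin N → ℂ)).symm.toLinearMap.comp B.mulVecLin).comp
      (WithLp.linearEquiv p ℂ (Fin N → ℂ)).toLinearMap)) x

theorem norm_entry_le_matOpNorm (i k : Fin N) : ‖B i k‖ ≤ matOpNorm p q B :=
  calc ‖B i k‖ = ‖WithLp.toLp q (B.mulVec (Pi.single k 1)) i‖ := by simp
    _ ≤ ‖WithLp.toLp q (B.mulVec (Pi.single k 1))‖ := PiLp.norm_apply_le _ i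
    _ ≤ matOpNorm p q B := by
        simpa using norm_toLp_mulVec_le_matOpNorm_mul p q B (PiLp.single p k (1 : ℂ))

end matOpNorm

section Matrix

variable {𝕜 n : Type*} [RCLike 𝕜] [Fintype n] [DecidableEq n] {M : Matrix n n 𝕜}

theorem exists_linearIsometry_pow_eq_toEuclideanCLM (hM : M ∈ Matrix.unitaryGroup n 𝕜) :
    ∃ A : EuclideanSpace 𝕜 n →ₗᵢ[𝕜] EuclideanSpace 𝕜 n,
      ∀ j x, (A ^ j) x = Matrix.toEuclideanCLM (n := n) (𝕜 := 𝕜) (M ^ j) x := by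
  have hU : Matrix.toEuclideanCLM (n := n) (𝕜 := 𝕜) M ∈ unitary _ := Unitary.map_mem _ hM
  refine ⟨(Unitary.linearIsometryEquiv ⟨_, hU⟩).toLinearIsometry, fun j x => ?_⟩
  rw [LinearIsometry.coe_pow, map_pow, FunLike.coe_pow_eq_iterate]
  rfl

theorem mul_norm_eigenvector_apply_sq_le (hM : M ∈ Matrix.unitaryGroup n 𝕜) {μ : 𝕜} {u : n → 𝕜}
    (hu : M.mulVec u = μ • u) (k : n) (T : ℕ) :
    T * ‖u k‖ ^ 2 ≤ (1 + 2 * ∑ j ∈ Finset.Ico 1 T, ‖(M ^ j) k k‖) * ∑ i, ‖u i‖ ^ 2 := by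
  obtain ⟨A, hA⟩ := exists_linearIsometry_pow_eq_toEuclideanCLM hM
  have hAu : A (WithLp.toLp 2 u) = μ • WithLp.toLp 2 u := by
    rw [← pow_one A, hA, pow_one, Matrix.toEuclideanCLM_toLp, hu, WithLp.toLp_smul]
  have hentry : ∀ j, ⟪EuclideanSpace.single k 1, (A ^ j) (EuclideanSpace.single k 1)⟫_𝕜 =
      (M ^ j) k k := fun j => by
    rw [hA, EuclideanSpace.inner_single_left, Matrix.ofLp_toEuclideanCLM]
    simp
  simpa [hentry, EuclideanSpace.inner_single_left, EuclideanSpace.norm_sq_eq] using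
    mul_norm_inner_eigenvector_sq_le A hAu (EuclideanSpace.single k 1) T

theorem stmt15_general (hM : M ∈ Matrix.unitaryGroup n 𝕜) {μ : 𝕜} {u : n → 𝕜}
    (hu : M.mulVec u = μ • u) (hu2 : ∑ i, ‖u i‖ ^ 2 = 1) {T : ℕ} (hT : 0 < T) {b : ℕ → ℝ}
    (hb : ∀ j, 1 ≤ j → j < T → ∀ k, ‖(M ^ j) k k‖ ≤ b j) :
    ‖u‖ ^ 2 ≤ (1 + 2 * ∑ j ∈ Finset.Ico 1 T, b j) / T := by
  have : Nonempty n := by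
    by_contra! hn
    simp at hu2
  obtain ⟨k, hk⟩ := (IsGreatest.pi_norm u).1
  rw [le_div_iff₀' (mod_cast hT), ← hk]
  calc T * ‖u k‖ ^ 2 ≤ (1 + 2 * ∑ j ∈ Finset.Ico 1 T, ‖(M ^ j) k k‖) * ∑ i, ‖u i‖ ^ 2 :=
        mul_norm_eigenvector_apply_sq_le hM hu k T
    _ ≤ 1 + 2 * ∑ j ∈ Finset.Ico 1 T, b j := by
        rw [hu2, mul_one]
        gcongr with j hj
        obtain ⟨h1j, hjT⟩ := Finset.mem_Ico.1 hj
        exact hb j h1j hjT k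

end Matrix

/-- Let `M` be a unitary `N × N` complex matrix, `μ ∈ ℂ`, `u ∈ ℂ^N` an
eigenvector: `M u = μ u`, with `‖u‖_{ℓ²} = 1`, and let `T` be a positive integer. Suppose
`C > 0`, `λ > 1` and `‖M^j‖_{ℓ¹→ℓ∞} ≤ C λ^{j/2} / √N` for all `1 ≤ j ≤ T - 1`. Then
`‖u‖²_{ℓ∞} ≤ 1/T + (2C/√N) Σ_{j=1}^{T-1} λ^{j/2}`. (Here `Fin N → ℂ` carries the sup norm,
so `‖u‖ = ‖u‖_{ℓ∞}`.) -/
theorem stmt15 (N : ℕ) (hN : 0 < N) (M : Matrix (Fin N) (Fin N) ℂ)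
    (hM : M ∈ Matrix.unitaryGroup (Fin N) ℂ)
    (μ : ℂ) (u : Fin N → ℂ) (hu : M.mulVec u = μ • u)
    (hu2 : Real.sqrt (∑ j, ‖u j‖ ^ 2) = 1)
    (T : ℕ) (hT : 0 < T) (C lam : ℝ) (hC : 0 < C) (hlam : 1 < lam)
    (hbound : ∀ j : ℕ, 1 ≤ j → j ≤ T - 1 →
      matOpNorm 1 ⊤ (M ^ j) ≤ C * lam ^ ((j : ℝ) / 2) / Real.sqrt N) :
    ‖u‖ ^ 2 ≤ 1 / (T : ℝ)
      + (2 * C / Real.sqrt N) * ∑ j ∈ Finset.Icc 1 (T - 1), lam ^ ((j : ℝ) / 2) := by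
  have hsharp : ‖u‖ ^ 2 ≤ (1 + 2 * ∑ j ∈ Finset.Ico 1 T, C * lam ^ ((j : ℝ) / 2) / √N) / T :=
    stmt15_general hM hu (Real.sqrt_eq_one.1 hu2) hT fun j h1j hjT k =>
      (norm_entry_le_matOpNorm 1 ⊤ _ k k).trans (hbound j h1j (Nat.le_sub_one_of_lt hjT))
  calc ‖u‖ ^ 2 ≤ 1 / T + 2 * (∑ j ∈ Finset.Ico 1 T, C * lam ^ ((j : ℝ) / 2) / √N) / T := by
        rwa [← add_div]
    _ ≤ 1 / T + 2 * ∑ j ∈ Finset.Ico 1 T, C * lam ^ ((j : ℝ) / 2) / √N := by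
        gcongr
        exact div_le_self (by positivity) (mod_cast hT)
    _ = 1 / T + 2 * C / √N * ∑ j ∈ Finset.Icc 1 (T - 1), lam ^ ((j : ℝ) / 2) := by
        rw [Finset.Icc_sub_one_right_eq_Ico_of_not_isMin (by simpa using hT.ne'), Finset.mul_sum,
          Finset.mul_sum]
        exact congrArg _ (Finset.sum_congr rfl fun j _ => by ring)
end
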